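/- arXiv:1509.03983 — 6 statements merged into one kernel-verified Lean document; each statement's English description precedes it below -/
import Mathlib

section
/- For every integer r ≥ 3 there exists a constant C = C(r) > 0 such that for every m ≥ 2 there is an r-uniform hypergraph that is universal for 𝓔^(r)(m) and has at most C·m^{r}/(ln m)^{r} edges. -/
/-!
Let `Q = 2 ^ S` be the power of two with `2 ^ Q ≤ m ≤ 2 ^ (2 * Q)`, so that `Q` has order `log m`;
it suffices to build, for large `S`, a universal hypergraph with `O((m / Q) ^ r)` edges. For
bounded `m` the complete `r`-uniform hypergraph on `r * m` vertices does the job.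

**The host.** Its vertices are pairs `(part, position)`. A guest `H` with at most `m` edges has at
most `r * m / t` vertices of degree at least `t`. Vertices of degree at least `2 * Q` go to the
base part `0`, of size `O(m / Q)`, on which all `r`-sets are edges. The few vertices of degree at
least `Δ = (2 * Q) ^ r` use the first `r * m / Δ` base positions, which form edges with all
`(r - 1)`-sets of host vertices. The remaining vertices are sorted into layers `u = 0, …, S`, layer
`u` holding the degrees in `[2 ^ (S - u), 2 ^ (S - u + 1))`. Layers `0, …, u` and the base together
need only `O(m * 2 ^ u / Q)` host vertices. Each layer is cut into `L = 2 * (D + 1)` parts, where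
`D = (r * Δ) ^ 2`. Between the `(r - 1)`-sets of earlier vertices (links) and a part of layer `u`
there is a random-like relation of density `1 / k`, with `k = 2 ^ ⌊2 ^ u / 4⌋`; each related pair
gives an edge.

**The embedding.** Edges of `H` through a vertex of degree at least `Δ` are free. In the hypergraph
of the other edges a vertex conflicts with at most `D` others, where two vertices conflict if they
lie in equal or intersecting edges. A greedy colouring with bounded colour classes
(`exists_capacity_coloring`) therefore distributes each layer over its `L` parts so that no part
receives two conflicting vertices. The parts are then embedded one after the other
(`exists_embedding`). The vertices sent to one part have pairwise disjoint families of links, each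
of at most `d = 2 ^ (S + 1 - u)` links, and each vertex needs a private position related to all its
links. The Hall condition for this assignment holds for a suitable relation by a union bound over
all potential violations (`exists_relation`). The union bound works because
`k ^ d ≤ 2 ^ (Q / 2) ≤ √m` is far smaller than the size of a part (`exp_condition`).

**The count.** Layer `u` contributes `O((m * 2 ^ u / Q) ^ r / k)` edges, and
`2 ^ (u * (r + 1)) = O(k)`, so the sum over all layers is a geometric series
(`universal_large`).
-/

/-- `EH` (a set of edges on the vertex set `Fin N`) is the edge set of an `r`-uniform
hypergraph that is universal for the family `𝓔^(r)(m)` of `r`-uniform hypergraphs with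
at most `m` edges and no isolated vertices: every such hypergraph (on some vertex set
`Fin k`) admits an injective map into `Fin N` sending edges to edges. -/
def EdgeUniversal (r m N : ℕ) (EH : Finset (Finset (Fin N))) : Prop :=
  ∀ (k : ℕ) (EF : Finset (Finset (Fin k))),
    (∀ e ∈ EF, e.card = r) →
    EF.card ≤ m →
    (∀ v : Fin k, ∃ e ∈ EF, v ∈ e) →
    ∃ φ : Fin k → Fin N, Function.Injective φ ∧ ∀ e ∈ EF, e.image φ ∈ EH

/-! ### A random relation satisfying the Hall condition -/

open Finset in
/-- For a uniformly random colouring `h : T → Fin k` and disjoint sets `S i` of size at most `d`,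
the probability that no `S i` is monochromatic in colour `a` is at most `(1 - k⁻ᵈ) ^ #s`. Here and
below, probabilities are expressed by counting colourings. -/
lemma card_avoid_le {T : Type} [Fintype T] [DecidableEq T] (k d : ℕ) (a : Fin k) {ι : Type}
    [DecidableEq ι] (s : Finset ι) (S : ι → Finset T) (hS : ∀ i ∈ s, (S i).card ≤ d)
    (hdis : ∀ i ∈ s, ∀ j ∈ s, i ≠ j → Disjoint (S i) (S j)) :
    (#{h : T → Fin k | ∀ i ∈ s, ∃ τ ∈ S i, h τ ≠ a} : ℝ) ≤
      (k : ℝ) ^ Fintype.card T * (1 - 1 / (k : ℝ) ^ d) ^ #s := by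
  have hk : 1 ≤ k := by have := a.2; omega
  have hk' : (1 : ℝ) ≤ k := by exact_mod_cast hk
  have hnn : (0 : ℝ) ≤ 1 - 1 / (k : ℝ) ^ d := by
    have : (1 : ℝ) ≤ (k : ℝ) ^ d := one_le_pow₀ hk'
    rw [sub_nonneg, div_le_one (by positivity)]; exact this
  induction s using Finset.induction_on with
  | empty => simp
  | insert j s hj ih =>
    have ih := ih (fun i hi => hS i (mem_insert_of_mem hi))
      (fun i hi l hl => hdis i (mem_insert_of_mem hi) l (mem_insert_of_mem hl))
    set P : Finset (T → Fin k) := {h | ∀ i ∈ s, ∃ τ ∈ S i, h τ ≠ a} with hP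
    have hsplit : ({h : T → Fin k | ∀ i ∈ insert j s, ∃ τ ∈ S i, h τ ≠ a} : Finset _) =
        P.filter (fun h => ¬ ∀ τ ∈ S j, h τ = a) := by
      ext h
      simp only [hP, mem_filter, mem_univ, true_and, mem_insert, forall_eq_or_imp, not_forall]
      constructor
      · rintro ⟨⟨τ, h1, h2⟩, h3⟩; exact ⟨h3, τ, h1, h2⟩
      · rintro ⟨h3, τ, h1, h2⟩; exact ⟨⟨τ, h1, h2⟩, h3⟩
    have hcount : #P ≤ #(P.filter (fun h => ∀ τ ∈ S j, h τ = a)) * k ^ d := by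
      -- Recolouring `S j` with `a` and remembering the old colours on `S j` is injective. It stays
      -- inside `P` because the other sets `S i` are disjoint from `S j`.
      calc #P ≤ #((P.filter (fun h => ∀ τ ∈ S j, h τ = a)) ×ˢ
              (univ : Finset (S j → Fin k))) := by
            refine card_le_card_of_injOn
              (fun h => (fun τ => if τ ∈ S j then a else h τ, fun τ => h τ)) ?_ ?_
            · intro h hh
              simp only [hP, coe_filter, mem_univ, true_and, Set.mem_ofPred_eq] at hh
              simp only [hP, coe_product, Set.mem_prod, mem_coe, mem_filter, mem_univ,
                true_and, and_true]
              refine ⟨fun i hi => ?_, fun τ hτ => by simp [hτ]⟩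
              obtain ⟨τ, h1, h2⟩ := hh i hi
              refine ⟨τ, h1, ?_⟩
              have hne : i ≠ j := fun h => hj (h ▸ hi)
              have : τ ∉ S j := Finset.disjoint_left.mp
                (hdis i (mem_insert_of_mem hi) j (mem_insert_self _ _) hne) h1
              simpa [this] using h2
            · intro h _ h' _ heq
              simp only [Prod.mk.injEq] at heq
              funext τ
              by_cases hτ : τ ∈ S j
              · exact congrFun heq.2 ⟨τ, hτ⟩
              · simpa [hτ] using congrFun heq.1 τ
        _ ≤ _ := by
            rw [card_product]
            gcongr
            simp only [card_univ, Fintype.card_fun, Fintype.card_fin, Fintype.card_coe]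
            exact Nat.pow_le_pow_right hk (hS j (mem_insert_self _ _))
    have hadd := card_filter_add_card_filter_not (s := P) (fun h => ∀ τ ∈ S j, h τ = a)
    rw [hsplit, card_insert_of_notMem hj, pow_succ, ← mul_assoc]
    have h1 : (#P : ℝ) ≤ #(P.filter (fun h => ∀ τ ∈ S j, h τ = a)) * (k : ℝ) ^ d := by
      exact_mod_cast hcount
    have h2 : (#(P.filter (fun h => ∀ τ ∈ S j, h τ = a)) : ℝ) +
        #(P.filter (fun h => ¬ ∀ τ ∈ S j, h τ = a)) = #P := by exact_mod_cast hadd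
    have h3 : (#P : ℝ) / (k : ℝ) ^ d ≤ #(P.filter (fun h => ∀ τ ∈ S j, h τ = a)) := by
      rw [div_le_iff₀ (by positivity)]; exact h1
    calc _ ≤ (#P : ℝ) * (1 - 1 / (k : ℝ) ^ d) := by
          rw [mul_sub, mul_one, mul_one_div]; linarith
      _ ≤ _ := by gcongr

open Finset in
/-- If every `w : V` carries an independent random colouring of `T`, the probability that no
`w ∉ U` sees one of the `t` disjoint sets `S i` entirely in colour `a` is at most
`exp (-#V / (2 k ^ d)) ^ t`, provided `U` covers at most half of `V`. -/
lemma card_bad_le {T V : Type} [Fintype T] [DecidableEq T] [Fintype V] [DecidableEq V]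
    (k d t : ℕ) (a : Fin k) (U : Finset V) (S : Fin t → Finset T) (hS : ∀ i, (S i).card ≤ d)
    (hdis : ∀ i j, i ≠ j → Disjoint (S i) (S j)) (hU : 2 * #U ≤ Fintype.card V) :
    (#{f : V → T → Fin k | ∀ w ∉ U, ∀ i, ∃ τ ∈ S i, f w τ ≠ a} : ℝ) ≤
      ((k : ℝ) ^ Fintype.card T) ^ Fintype.card V *
        Real.exp (-(Fintype.card V / (2 * (k : ℝ) ^ d))) ^ t := by
  have hk : 1 ≤ k := by have := a.2; omega
  have hk' : (1 : ℝ) ≤ k := by exact_mod_cast hk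
  have hnn : (0 : ℝ) ≤ 1 - 1 / (k : ℝ) ^ d := by
    have : (1 : ℝ) ≤ (k : ℝ) ^ d := one_le_pow₀ hk'
    rw [sub_nonneg, div_le_one (by positivity)]; exact this
  set P : Finset (T → Fin k) := {h | ∀ i, ∃ τ ∈ S i, h τ ≠ a} with hP
  have hPc : (#P : ℝ) ≤ (k : ℝ) ^ Fintype.card T * (1 - 1 / (k : ℝ) ^ d) ^ t := by
    have := card_avoid_le k d a (univ : Finset (Fin t)) S (fun i _ => hS i)
      (fun i _ j _ => hdis i j)
    simpa [hP] using this
  have hset : ({f : V → T → Fin k | ∀ w ∉ U, ∀ i, ∃ τ ∈ S i, f w τ ≠ a} : Finset _) =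
      Fintype.piFinset (fun w => if w ∈ U then univ else P) := by
    ext f
    simp only [mem_filter, mem_univ, true_and, Fintype.mem_piFinset]
    refine forall_congr' fun w => ?_
    by_cases hw : w ∈ U <;> simp [hw, hP]
  rw [hset, Fintype.card_piFinset]
  push_cast
  set K := (k : ℝ) ^ Fintype.card T with hK
  set y := (1 - 1 / (k : ℝ) ^ d) with hy
  have hyexp : y ≤ Real.exp (-(1 / (k : ℝ) ^ d)) := by
    have := Real.add_one_le_exp (-(1 / (k : ℝ) ^ d)); linarith
  calc ∏ w : V, (#(if w ∈ U then univ else P) : ℝ)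
      ≤ ∏ w : V, (K * (if w ∈ U then 1 else y ^ t)) := by
        refine prod_le_prod (fun _ _ => by positivity) (fun w _ => ?_)
        by_cases hw : w ∈ U
        · simp [hw, hK]
        · simpa [hw] using hPc
    _ = K ^ Fintype.card V * (y ^ t) ^ #(univ.filter (fun w => w ∉ U)) := by
        rw [prod_mul_distrib, prod_const, card_univ, prod_ite]
        simp
    _ ≤ _ := by
        gcongr
        rw [← pow_mul, mul_comm t, pow_mul]
        gcongr
        calc y ^ #(univ.filter (fun w => w ∉ U))
            ≤ Real.exp (-(1 / (k : ℝ) ^ d)) ^ #(univ.filter (fun w => w ∉ U)) := by gcongr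
          _ ≤ _ := by
            rw [← Real.exp_nat_mul]
            apply Real.exp_le_exp.mpr
            have h1 : #(univ.filter (fun w => w ∉ U)) + #U = Fintype.card V := by
              have := card_filter_add_card_filter_not (s := (univ : Finset V)) (fun w => w ∈ U)
              simp only [filter_mem_eq_inter, univ_inter, card_univ] at this; omega
            have h2 : (Fintype.card V : ℝ) ≤ 2 * #(univ.filter (fun w => w ∉ U)) := by
              exact_mod_cast (by omega)
            have h3 : (0 : ℝ) < (k : ℝ) ^ d := by positivity
            rw [mul_neg, neg_le_neg_iff, mul_one_div, div_le_div_iff₀ (by positivity) h3]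
            nlinarith

open Finset in
/-- A set of at most `d` elements is the set of values of a partial function on `Fin d`. This
bounds the number of such sets by `(#T + 1) ^ d` in the union bound. -/
lemma exists_code {T : Type} [DecidableEq T] [Fintype T] (d : ℕ) (S : Finset T) (h : #S ≤ d) :
    ∃ s : Fin d → Option T, (univ.filter (fun τ => ∃ j, s j = some τ)) = S := by
  refine ⟨fun j => if hj : j.1 < #S then some (S.equivFin.symm ⟨j.1, hj⟩) else none, ?_⟩
  ext τ
  simp only [mem_filter, mem_univ, true_and]
  constructor
  · rintro ⟨j, hj⟩
    split_ifs at hj with h1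
    · simp only [Option.some.injEq] at hj
      rw [← hj]; exact (S.equivFin.symm _).2
  · intro hτ
    refine ⟨⟨(S.equivFin ⟨τ, hτ⟩).1, lt_of_lt_of_le (S.equivFin ⟨τ, hτ⟩).2 h⟩, ?_⟩
    simp

open Finset in
/-- There is a relation `R` between `T` and `V` of density at most `1 / k` such that any at most
`#V / 2` disjoint subsets of `T`, each of size at most `d`, can be assigned distinct elements of `V`
each related to its whole set.

Colour `T × V` randomly with `k` colours. A violation of the Hall condition for colour class `a` is
described by `t` disjoint sets together with a set `U` of `t` elements of `V` containing all
candidates. A union bound over `a`, `U` and the sets excludes violations for all `k` colours at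
once, so the sparsest colour class can be taken as `R`. -/
lemma exists_relation (T V : Type) [Fintype T] [DecidableEq T] [Fintype V] [DecidableEq V]
    (k d : ℕ) (hk : 0 < k)
    (hexp : (k : ℝ) * (Fintype.card V : ℝ) ^ 2 * ((Fintype.card T : ℝ) + 1) ^ d <
      Real.exp (Fintype.card V / (2 * (k : ℝ) ^ d))) :
    ∃ R : Finset (T × V), #R * k ≤ Fintype.card T * Fintype.card V ∧
      ∀ (I : Type) [Fintype I] (S : I → Finset T), 2 * Fintype.card I ≤ Fintype.card V →
        (∀ i, #(S i) ≤ d) → (∀ i j, i ≠ j → Disjoint (S i) (S j)) →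
        ∃ g : I → V, Function.Injective g ∧ ∀ i, ∀ τ ∈ S i, (τ, g i) ∈ R := by
  classical
  set n := Fintype.card V with hn
  set N := Fintype.card T with hN
  let fam : ∀ {t : ℕ}, (Fin t → Fin d → Option T) → Fin t → Finset T :=
    fun s i => univ.filter (fun τ => ∃ j, s i j = some τ)
  let bad : (t : ℕ) → (Fin k × Finset V × (Fin t → Fin d → Option T)) →
      Finset (V → T → Fin k) := fun t p =>
    univ.filter (fun f => ∀ w ∉ p.2.1, ∀ i, ∃ τ ∈ fam p.2.2 i, f w τ ≠ p.1)
  let idx : (t : ℕ) → Finset (Fin k × Finset V × (Fin t → Fin d → Option T)) := fun t =>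
    (univ ×ˢ (powersetCard t univ ×ˢ univ)).filter
      (fun p => (∀ i, #(fam p.2.2 i) ≤ d) ∧ ∀ i j, i ≠ j → Disjoint (fam p.2.2 i) (fam p.2.2 j))
  set Ω : ℝ := ((k : ℝ) ^ N) ^ n with hΩ
  have hΩpos : 0 < Ω := by positivity
  set ε := Real.exp (-(n / (2 * (k : ℝ) ^ d))) with hε
  set x : ℝ := n * ((N : ℝ) + 1) ^ d * ε with hx
  have hx0 : 0 ≤ x := by positivity
  have hknx : (k : ℝ) * n * x < 1 := by
    have : (k : ℝ) * n * x = (k * (n : ℝ) ^ 2 * ((N : ℝ) + 1) ^ d) * ε := by rw [hx]; ring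
    rw [this, hε, Real.exp_neg, ← div_eq_mul_inv, div_lt_one (Real.exp_pos _)]
    exact hexp
  -- `bad t p` is the event that the violation `p` of size `t` occurs; `x` bounds the probability
  -- cost per set of the violation, so that all violations of size `t` cost at most `k * x ^ t`.
  have hlayer : ∀ t, 2 * t ≤ n → (#((idx t).biUnion (bad t)) : ℝ) ≤ Ω * (k * x ^ t) := by
    intro t ht
    have hidx : (#(idx t) : ℝ) ≤ k * ((n : ℝ) ^ t * (((N : ℝ) + 1) ^ d) ^ t) := by
      have h1 : #(idx t) ≤ k * (n ^ t * ((N + 1) ^ d) ^ t) := by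
        refine (card_filter_le _ _).trans ?_
        rw [card_product, card_product, card_powersetCard, card_univ, card_univ]
        have hc : #(univ : Finset (Fin t → Fin d → Option T)) = ((N + 1) ^ d) ^ t := by
          simp [card_univ, hN]
        rw [hc, Fintype.card_fin]
        gcongr
        exact (Nat.choose_le_pow _ _)
      exact_mod_cast h1
    calc (#((idx t).biUnion (bad t)) : ℝ) ≤ ∑ p ∈ idx t, (#(bad t p) : ℝ) := by
          exact_mod_cast card_biUnion_le
      _ ≤ ∑ p ∈ idx t, Ω * ε ^ t := by
          refine sum_le_sum fun p hp => ?_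
          simp only [idx, mem_filter, mem_product, mem_univ, true_and, and_true,
            mem_powersetCard] at hp
          exact card_bad_le k d t p.1 p.2.1 (fam p.2.2) hp.2.1 hp.2.2 (by rw [hp.1.2]; exact ht)
      _ = #(idx t) * (Ω * ε ^ t) := by rw [sum_const, nsmul_eq_mul]
      _ ≤ (k * ((n : ℝ) ^ t * (((N : ℝ) + 1) ^ d) ^ t)) * (Ω * ε ^ t) := by gcongr
      _ = Ω * (k * x ^ t) := by rw [hx]; ring
  obtain ⟨f, hf⟩ : ∃ f : V → T → Fin k,
      f ∉ (Icc 1 (n / 2)).biUnion (fun t => (idx t).biUnion (bad t)) := by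
    by_contra hcon
    push Not at hcon
    have hall : (univ : Finset (V → T → Fin k)) ⊆
      (Icc 1 (n / 2)).biUnion (fun t => (idx t).biUnion (bad t)) := fun f _ => hcon f
    have hc : (#(univ : Finset (V → T → Fin k)) : ℝ) = Ω := by
      rw [card_univ]; simp [hΩ, hN, hn]
    have hle : Ω ≤ ∑ t ∈ Icc 1 (n / 2), Ω * (k * x ^ t) := by
      rw [← hc]
      calc (#(univ : Finset (V → T → Fin k)) : ℝ)
          ≤ #((Icc 1 (n / 2)).biUnion (fun t => (idx t).biUnion (bad t))) := by
            exact_mod_cast card_le_card hall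
        _ ≤ ∑ t ∈ Icc 1 (n / 2), (#((idx t).biUnion (bad t)) : ℝ) := by
            exact_mod_cast card_biUnion_le
        _ ≤ _ := by
            rw [hc]
            refine sum_le_sum fun t ht => hlayer t ?_
            rw [mem_Icc] at ht; omega
    have hlt : ∑ t ∈ Icc 1 (n / 2), Ω * (k * x ^ t) < Ω := by
      calc ∑ t ∈ Icc 1 (n / 2), Ω * (k * x ^ t) ≤ ∑ t ∈ Icc 1 (n / 2), Ω * (k * x) := by
            refine sum_le_sum fun t ht => ?_
            rw [mem_Icc] at ht
            have hn1 : (1 : ℝ) ≤ n := by exact_mod_cast (by omega : 1 ≤ n)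
            have hk1 : (1 : ℝ) ≤ k := by exact_mod_cast hk
            have hx1 : x ≤ 1 := by
              nlinarith [mul_nonneg (by linarith : (0 : ℝ) ≤ k - 1) hx0,
                mul_nonneg (mul_nonneg (by linarith : (0 : ℝ) ≤ k) hx0)
                  (by linarith : (0 : ℝ) ≤ n - 1)]
            gcongr
            exact pow_le_of_le_one hx0 hx1 (by omega)
        _ = (n / 2 : ℕ) * (Ω * (k * x)) := by simp
        _ ≤ n * (Ω * (k * x)) := by
            gcongr; exact Nat.div_le_self _ _
        _ = Ω * (k * n * x) := by ring
        _ < Ω * 1 := by gcongr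
        _ = Ω := mul_one _
    linarith
  have : Nonempty (Fin k) := ⟨⟨0, hk⟩⟩
  have hkpos : (0 : ℝ) < k := by exact_mod_cast hk
  -- The sparsest colour class of the colouring `f` has at most the average size.
  obtain ⟨a, -, ha⟩ := Finset.exists_card_fiber_le_of_card_le_nsmul
    (s := (univ : Finset (T × V))) (t := (univ : Finset (Fin k)))
    (f := fun p => f p.2 p.1) (b := (N * n / k : ℝ)) univ_nonempty (by
      simp only [card_univ, Fintype.card_prod, Fintype.card_fin, nsmul_eq_mul, ← hN, ← hn]
      push_cast
      rw [mul_div_cancel₀ _ hkpos.ne'])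
  refine ⟨univ.filter (fun p => f p.2 p.1 = a), ?_, ?_⟩
  · rw [le_div_iff₀ hkpos] at ha
    exact_mod_cast ha
  intro I _ S hI hSd hdis
  let cand : I → Finset V := fun i => univ.filter (fun w => ∀ τ ∈ S i, f w τ = a)
  suffices h : ∀ A : Finset I, #A ≤ #(A.biUnion cand) by
    obtain ⟨g, hg, hgc⟩ := (Finset.all_card_le_biUnion_card_iff_exists_injective cand).mp h
    refine ⟨g, hg, fun i τ hτ => ?_⟩
    have := hgc i
    simp only [cand, mem_filter, mem_univ, true_and] at this ⊢
    exact this τ hτ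
  intro A
  by_contra hA
  push Not at hA
  have hAI : #A ≤ Fintype.card I := card_le_univ A
  -- The candidate set of a Hall violator `A` is enlarged to a set `U` of exactly `#A` elements, as
  -- the events `bad` are indexed by such sets.
  obtain ⟨U, hU1, hU2⟩ := exists_superset_card_eq (s := A.biUnion cand) (n := #A)
    hA.le (by omega)
  choose s hs using fun i : I => exists_code d (S i) (hSd i)
  let e := A.equivFin.symm
  apply hf
  simp only [mem_biUnion, mem_Icc]
  have hfam : ∀ i, fam (fun i => s (e i)) i = S (e i) := fun i => hs _
  refine ⟨#A, ⟨by omega, by omega⟩, ⟨a, U, fun i => s (e i)⟩, ?_, ?_⟩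
  · simp only [idx, mem_filter, mem_product, mem_univ, true_and, and_true, mem_powersetCard,
      hfam, subset_univ, hU2]
    refine ⟨fun i => hSd _, fun i j hij => hdis _ _ ?_⟩
    intro h
    exact hij (e.injective (Subtype.ext h))
  · simp only [bad, mem_filter, mem_univ, true_and, hfam]
    intro w hw i
    by_contra hcon
    push Not at hcon
    refine hw (hU1 (mem_biUnion.mpr ⟨e i, (e i).2, ?_⟩))
    simpa [cand] using hcon

open Finset in
/-- The relation `R` between `T` and the positions `0, …, n - 1` is good for degree `d`: any at
most `n / 2` disjoint subsets of `T`, each of size at most `d`, can be assigned distinct positions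
each related to its whole set. In the host, `T` is the set of possible links of vertices in a
part with `n` positions. -/
def LinkGood {β : Type} [DecidableEq β] (T : Finset β) (n d : ℕ) (R : Finset (β × ℕ)) : Prop :=
  ∀ (I : Type) [Fintype I] (S : I → Finset β), 2 * Fintype.card I ≤ n → (∀ i, S i ⊆ T) →
    (∀ i, #(S i) ≤ d) → (∀ i j, i ≠ j → Disjoint (S i) (S j)) →
    ∃ g : I → ℕ, Function.Injective g ∧ (∀ i, g i < n) ∧ ∀ i, ∀ τ ∈ S i, (τ, g i) ∈ R

open Finset in
/-- `exists_relation` restated for a finite set `T` and positions `0, …, n - 1`. -/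
lemma exists_linkGood {β : Type} [DecidableEq β] (T : Finset β) (n k d : ℕ) (hk : 0 < k)
    (hexp : (k : ℝ) * (n : ℝ) ^ 2 * ((#T : ℝ) + 1) ^ d < Real.exp (n / (2 * (k : ℝ) ^ d))) :
    ∃ R : Finset (β × ℕ), R ⊆ T ×ˢ range n ∧ #R * k ≤ #T * n ∧ LinkGood T n d R := by
  obtain ⟨R, hR, hgood⟩ := exists_relation T (Fin n) k d hk (by simpa using hexp)
  refine ⟨R.image (fun p => (p.1.1, p.2.1)), ?_, ?_, ?_⟩
  · intro p hp
    obtain ⟨⟨τ, w⟩, -, rfl⟩ := mem_image.mp hp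
    simp
  · calc _ ≤ #R * k := Nat.mul_le_mul_right _ card_image_le
      _ ≤ _ := by simpa using hR
  · intro I _ S hI hST hSd hdis
    obtain ⟨g, hg, hgR⟩ := hgood I (fun i => (S i).subtype (· ∈ T)) (by simpa using hI)
      (fun i => by
        rw [card_subtype]; exact (card_filter_le _ _).trans (hSd i))
      (fun i j hij => by
        rw [Finset.disjoint_left]
        intro τ h1 h2
        rw [mem_subtype] at h1 h2
        exact Finset.disjoint_left.mp (hdis i j hij) h1 h2)
    refine ⟨fun i => (g i).1, fun i j hij => hg (Fin.ext hij), fun i => (g i).2, ?_⟩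
    intro i τ hτ
    rw [mem_image]
    exact ⟨(⟨τ, hST i hτ⟩, g i), hgR i _ (by rw [mem_subtype]; exact hτ), rfl⟩

/-! ### Distributing vertices over conflict-free parts -/

open Finset in
/-- If every vertex of `G` conflicts with at most `D` vertices, then `2 * (D + 1)` colours suffice
to colour `G` without monochromatic conflicts and with classes of size at most `c`, as soon as
`#G ≤ (D + 1) * c`. Greedily, at most `D` colours are forbidden by conflicts and at most `D`
classes are full before the last vertex is coloured. -/
lemma exists_capacity_coloring {α : Type} [DecidableEq α] (conf : α → α → Prop)
    (hsymm : ∀ a b, conf a b → conf b a) (D c : ℕ) (G : Finset α)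
    (hconf : ∀ a ∈ G, ∃ B : Finset α, #B ≤ D ∧ ∀ b, conf a b → b ∈ B)
    (hG : #G ≤ (D + 1) * c) :
    ∃ col : α → ℕ, (∀ a, col a < 2 * (D + 1)) ∧
      (∀ a ∈ G, ∀ b ∈ G, a ≠ b → conf a b → col a ≠ col b) ∧
      ∀ j, #(G.filter (fun a => col a = j)) ≤ c := by
  induction G using Finset.induction_on with
  | empty => exact ⟨fun _ => 0, by simp, by simp, by simp⟩
  | insert a G ha ih =>
    rw [card_insert_of_notMem ha] at hG
    obtain ⟨col, hlt, hprop, hcap⟩ := ih (fun b hb => hconf b (mem_insert_of_mem hb)) (by omega)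
    obtain ⟨B, hB, hBc⟩ := hconf a (mem_insert_self _ _)
    set full := (range (2 * (D + 1))).filter (fun j => c ≤ #(G.filter (fun b => col b = j)))
      with hfull
    have hfullc : #full < D + 1 := by
      have h1 : #full * c ≤ #G := by
        calc #full * c = ∑ j ∈ full, c := by simp
          _ ≤ ∑ j ∈ full, #(G.filter (fun b => col b = j)) :=
            sum_le_sum fun j hj => (mem_filter.mp hj).2
          _ = #(full.biUnion fun j => G.filter (fun b => col b = j)) := by
            rw [card_biUnion]
            intro i _ j _ hij
            rw [Function.onFun, Finset.disjoint_left]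
            intro b h1 h2
            exact hij ((mem_filter.mp h1).2.symm.trans (mem_filter.mp h2).2)
          _ ≤ #G := card_le_card (by
            intro b hb
            obtain ⟨j, _, hj⟩ := mem_biUnion.mp hb
            exact (mem_filter.mp hj).1)
      by_contra hcon
      have : (D + 1) * c ≤ #full * c := Nat.mul_le_mul_right _ (by omega)
      omega
    obtain ⟨j, hj⟩ : ∃ j ∈ range (2 * (D + 1)), j ∉ full ∪ B.image col := by
      by_contra hcon
      push Not at hcon
      have h1 := card_le_card (s := range (2 * (D + 1))) (t := full ∪ B.image col) hcon
      have h2 := card_union_le full (B.image col)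
      have h3 : #(B.image col) ≤ #B := card_image_le
      rw [card_range] at h1
      omega
    rw [mem_union, not_or] at hj
    obtain ⟨hjr, hjf, hjB⟩ := hj
    have hBj : ∀ b, conf a b → col b ≠ j := fun b hb h =>
      hjB (mem_image.mpr ⟨b, hBc b hb, h⟩)
    refine ⟨fun b => if b = a then j else col b, fun b => ?_, ?_, fun i => ?_⟩
    · dsimp only; split_ifs
      · exact mem_range.mp hjr
      · exact hlt b
    · intro b hb b' hb' hne hc
      rw [mem_insert] at hb hb'
      by_cases h1 : b = a
      · have h2 : b' ≠ a := fun h => hne (h1.trans h.symm)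
        simp only [h1, h2, if_true, if_false]
        exact (hBj b' (h1 ▸ hc)).symm
      · by_cases h2 : b' = a
        · simp only [h1, h2, if_true, if_false]
          exact hBj b (h2 ▸ hsymm _ _ hc)
        · simp only [h1, h2, if_false]
          exact hprop b (hb.resolve_left h1) b' (hb'.resolve_left h2) hne hc
    · have hsame : G.filter (fun b => (if b = a then j else col b) = i) =
          G.filter (fun b => col b = i) := by
        refine filter_congr fun b hb => ?_
        have : b ≠ a := fun h => ha (h ▸ hb)
        simp [this]
      rw [filter_insert, hsame]
      split_ifs with h1
      · simp only [if_true] at h1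
        subst h1
        have : ¬ c ≤ #(G.filter (fun b => col b = j)) := fun h =>
          hjf (mem_filter.mpr ⟨hjr, h⟩)
        exact (card_insert_le _ _).trans (by omega)
      · exact hcap i

open Finset in
/-- Two vertices conflict in `E` if they lie in edges which intersect or coincide. Families of
links of non-conflicting vertices are disjoint, and an edge contains no two non-conflicting
vertices. A non-isolated vertex conflicts with itself. -/
def Conflict {α : Type} [DecidableEq α] (E : Finset (Finset α)) (a b : α) : Prop :=
  ∃ e ∈ E, ∃ e' ∈ E, a ∈ e ∧ b ∈ e' ∧ ¬ Disjoint e e'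

open Finset in
lemma Conflict.symm {α : Type} [DecidableEq α] {E : Finset (Finset α)} {a b : α}
    (h : Conflict E a b) : Conflict E b a := by
  obtain ⟨e, he, e', he', h1, h2, h3⟩ := h
  exact ⟨e', he', e, he, h2, h1, fun h => h3 h.symm⟩

open Finset in
/-- In an `r`-uniform hypergraph of maximum degree at most `Δ`, a vertex conflicts with at most
`(r * Δ) ^ 2` vertices: those reachable in two steps along edges. -/
lemma conflict_card {α : Type} [DecidableEq α] {E : Finset (Finset α)} (r Δ : ℕ)
    (hE : ∀ e ∈ E, #e = r) (hΔ : ∀ e ∈ E, ∀ v ∈ e, #(E.filter (fun e => v ∈ e)) ≤ Δ) (a : α) :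
    ∃ B : Finset α, #B ≤ (r * Δ) ^ 2 ∧ ∀ b, Conflict E a b → b ∈ B := by
  by_cases ha : ∃ e ∈ E, a ∈ e
  · obtain ⟨e0, he0, hae0⟩ := ha
    have key : ∀ F : Finset (Finset α), (∀ e ∈ F, e ∈ E) → #(F.biUnion id) ≤ #F * r := by
      intro F hF
      exact card_biUnion_le_card_mul _ _ _ fun e he => (hE e (hF e he)).le
    set N1 := (E.filter (fun e => a ∈ e)).biUnion id with hN1
    have hN1c : #N1 ≤ Δ * r := by
      refine (key _ fun e he => (mem_filter.mp he).1).trans ?_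
      exact Nat.mul_le_mul_right _ (hΔ e0 he0 a hae0)
    refine ⟨N1.biUnion (fun v => (E.filter (fun e => v ∈ e)).biUnion id), ?_, ?_⟩
    · calc _ ≤ #N1 * (Δ * r) := by
            refine card_biUnion_le_card_mul _ _ _ fun v hv => ?_
            refine (key _ fun e he => (mem_filter.mp he).1).trans ?_
            obtain ⟨e, he, hve⟩ := mem_biUnion.mp hv
            exact Nat.mul_le_mul_right _ (hΔ e (mem_filter.mp he).1 v hve)
        _ ≤ (Δ * r) * (Δ * r) := Nat.mul_le_mul_right _ hN1c
        _ = _ := by ring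
    · rintro b ⟨e, he, e', he', h1, h2, h3⟩
      obtain ⟨v, hv, hv'⟩ := Finset.not_disjoint_iff.mp h3
      simp only [hN1, mem_biUnion, mem_filter, id]
      exact ⟨v, ⟨e, ⟨he, h1⟩, hv⟩, e', ⟨he', hv'⟩, h2⟩
  · refine ⟨∅, by simp, ?_⟩
    rintro b ⟨e, he, e', he', h1, h2, h3⟩
    exact absurd ⟨e, he, h1⟩ ha

/-! ### The host hypergraph and the embedding part by part -/

open Finset in
/-- The host vertices in parts `0, …, i - 1`, where part `j` consists of the pairs `(j, x)` with
`x < n j`. -/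
def hostBelow (n : ℕ → ℕ) (i : ℕ) : Finset (ℕ × ℕ) :=
  (range i).biUnion (fun j => (range (n j)).image (Prod.mk j))

open Finset in
lemma mem_hostBelow {n : ℕ → ℕ} {i : ℕ} {p : ℕ × ℕ} :
    p ∈ hostBelow n i ↔ p.1 < i ∧ p.2 < n p.1 := by
  obtain ⟨a, b⟩ := p
  simp only [hostBelow, mem_biUnion, mem_image, mem_range, Prod.mk.injEq]
  constructor
  · rintro ⟨j, hj, x, hx, rfl, rfl⟩; exact ⟨hj, hx⟩
  · rintro ⟨h1, h2⟩; exact ⟨a, h1, b, h2, rfl, rfl⟩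

open Finset in
lemma card_hostBelow_le (n : ℕ → ℕ) (i : ℕ) : #(hostBelow n i) ≤ ∑ j ∈ range i, n j := by
  refine card_biUnion_le.trans (sum_le_sum fun j _ => ?_)
  exact card_image_le.trans (card_range _).le

open Finset in
/-- Let `π` assign the vertices of `E` to parts so that no part other than part `0` contains two
conflicting vertices, and let the relation `R i` between links and each part `i ≠ 0` be good for
the degrees occurring in that part, which has at least twice as many positions as vertices. Then any
injective placement `φ0` of part `0` extends part by part: the positions `φ` are injective on each
part, and in every edge not inside part `0` some vertex is related to its link, the image of
the rest of the edge. -/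
lemma exists_embedding {α : Type} [Fintype α] [DecidableEq α] (E : Finset (Finset α)) (r : ℕ)
    (hr : 2 ≤ r) (hE : ∀ e ∈ E, #e = r) (π : α → ℕ) (n d : ℕ → ℕ) (M : ℕ)
    (R : ℕ → Finset (Finset (ℕ × ℕ) × ℕ))
    (hR : ∀ i < M, LinkGood (powersetCard (r - 1) (hostBelow n (i + 1))) (n (i + 1))
      (d (i + 1)) (R (i + 1)))
    (hcard : ∀ i < M, 2 * #(univ.filter (fun a => π a = i + 1)) ≤ n (i + 1))
    (hdeg : ∀ a, π a ≠ 0 → #(E.filter (fun e => a ∈ e)) ≤ d (π a))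
    (hconf : ∀ a b, a ≠ b → π a = π b → π a ≠ 0 → ¬ Conflict E a b)
    (φ0 : α → ℕ) (h0 : ∀ a, π a = 0 → φ0 a < n 0)
    (h0inj : ∀ a b, π a = 0 → π b = 0 → φ0 a = φ0 b → a = b) :
    ∀ i ≤ M, ∃ φ : α → ℕ, (∀ a, π a ≤ i → φ a < n (π a)) ∧
      (∀ a b, π a ≤ i → π a = π b → φ a = φ b → a = b) ∧
      (∀ a, π a = 0 → φ a = φ0 a) ∧
      ∀ e ∈ E, (∀ a ∈ e, π a ≤ i) → (∀ a ∈ e, π a = 0) ∨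
        ∃ a ∈ e, π a ≠ 0 ∧ ((e.erase a).image (fun b => (π b, φ b)), φ a) ∈ R (π a) := by
  intro i
  induction i with
  | zero =>
    intro _
    refine ⟨φ0, fun a ha => ?_, fun a b ha hab h => ?_, fun _ _ => rfl, fun e _ h => ?_⟩
    · have : π a = 0 := by omega
      rw [this]; exact h0 a this
    · exact h0inj a b (by omega) (by omega) h
    · exact Or.inl fun a ha => by have := h a ha; omega
  | succ i ih =>
    intro hi
    obtain ⟨φ, hlt, hinj, hφ0, hedge⟩ := ih (by omega)
    let Φ : α → ℕ × ℕ := fun b => (π b, φ b)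
    have hΦ : ∀ a b, π a ≤ i → Φ a = Φ b → a = b := by
      intro a b ha hab
      simp only [Φ, Prod.mk.injEq] at hab
      exact hinj a b ha hab.1 hab.2
    -- The vertices `I` of the next part are placed simultaneously. `F a` is the set of edges at `a`
    -- whose other vertices are already placed, and `S a` is the set of their links.
    let I := {a : α // π a = i + 1}
    let F : I → Finset (Finset α) := fun a =>
      E.filter (fun e => a.1 ∈ e ∧ ∀ b ∈ e, b ≠ a.1 → π b ≤ i)
    let S : I → Finset (Finset (ℕ × ℕ)) := fun a => (F a).image (fun e => (e.erase a.1).image Φ)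
    have hFmem : ∀ a : I, ∀ e, e ∈ F a → e ∈ E ∧ a.1 ∈ e ∧ ∀ b ∈ e.erase a.1, π b ≤ i := by
      intro a e he
      obtain ⟨h1, h2, h3⟩ := mem_filter.mp he
      exact ⟨h1, h2, fun b hb => h3 b (mem_of_mem_erase hb) (ne_of_mem_erase hb)⟩
    have hcardI : Fintype.card I = #(univ.filter (fun a => π a = i + 1)) :=
      Fintype.card_subtype _
    obtain ⟨g, hg, hgn, hgR⟩ := hR i (by omega) I S (by rw [hcardI]; exact hcard i (by omega))
      (by
        intro a τ hτ
        obtain ⟨e, he, rfl⟩ := mem_image.mp hτ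
        obtain ⟨heE, hae, hb⟩ := hFmem a e he
        rw [mem_powersetCard]
        constructor
        · intro p hp
          obtain ⟨b, hbe, rfl⟩ := mem_image.mp hp
          rw [mem_hostBelow]
          exact ⟨Nat.lt_succ_of_le (hb b hbe), hlt b (hb b hbe)⟩
        · rw [card_image_of_injOn, card_erase_of_mem hae, hE e heE]
          intro b hb1 c _ hbc
          exact hΦ b c (hb b hb1) hbc)
      (by
        intro a
        have ha : π a.1 = i + 1 := a.2
        refine card_image_le.trans ?_
        rw [← ha]
        refine le_trans (card_le_card ?_) (hdeg a.1 (by omega))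
        intro e he
        exact mem_filter.mpr ⟨(hFmem a e he).1, (hFmem a e he).2.1⟩)
      (by
        intro a b hab
        rw [Finset.disjoint_left]
        intro τ h1 h2
        obtain ⟨e, he, rfl⟩ := mem_image.mp h1
        obtain ⟨e', he', heq⟩ := mem_image.mp h2
        obtain ⟨heE, hae, hbe⟩ := hFmem a e he
        obtain ⟨heE', hae', hbe'⟩ := hFmem b e' he'
        -- A common link is nonempty since `r ≥ 2`, so it yields a vertex common to an edge at `a`
        -- and an edge at `b`, which is a conflict.
        have hne : (e.erase a.1).Nonempty := by
          rw [← card_pos, card_erase_of_mem hae, hE e heE]; omega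
        obtain ⟨v, hv⟩ := hne
        have hv' : Φ v ∈ (e'.erase b.1).image Φ := by
          rw [heq]; exact mem_image_of_mem _ hv
        obtain ⟨v', hv'1, hv'2⟩ := mem_image.mp hv'
        have : v' = v := hΦ v' v (hbe' v' hv'1) hv'2
        subst this
        refine hconf a.1 b.1 (fun h => hab (Subtype.ext h)) (a.2.trans b.2.symm)
          (by have := a.2; omega) ⟨e, heE, e', heE', hae, hae', ?_⟩
        exact Finset.not_disjoint_iff.mpr ⟨v', mem_of_mem_erase hv, mem_of_mem_erase hv'1⟩)
    let ψ : α → ℕ := fun a => if h : π a = i + 1 then g ⟨a, h⟩ else φ a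
    have hψ1 : ∀ a (h : π a = i + 1), ψ a = g ⟨a, h⟩ := fun a h => by simp only [ψ, dif_pos h]
    have hψ2 : ∀ a, π a ≤ i → ψ a = φ a := fun a h => by
      simp only [ψ, dif_neg (by omega : ¬ π a = i + 1)]
    have himg : ∀ s : Finset α, (∀ b ∈ s, π b ≤ i) →
        s.image (fun b => (π b, ψ b)) = s.image Φ := by
      intro s hs
      refine image_congr fun b hb => ?_
      simp only [Φ, hψ2 b (hs b hb)]
    refine ⟨ψ, fun a ha => ?_, fun a b ha hab h => ?_, fun a ha => ?_, fun e he h => ?_⟩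
    · by_cases h : π a = i + 1
      · rw [hψ1 a h, h]; exact hgn _
      · rw [hψ2 a (by omega)]; exact hlt a (by omega)
    · by_cases h' : π a = i + 1
      · rw [hψ1 a h', hψ1 b (by omega)] at h
        exact congrArg Subtype.val (hg h)
      · rw [hψ2 a (by omega), hψ2 b (by omega)] at h
        exact hinj a b (by omega) hab h
    · rw [hψ2 a (by omega)]; exact hφ0 a ha
    · by_cases hall : ∀ a ∈ e, π a ≤ i
      · refine (hedge e he hall).imp id ?_
        rintro ⟨a, hae, ha0, haR⟩
        refine ⟨a, hae, ha0, ?_⟩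
        rw [himg _ fun b hb => hall b (mem_of_mem_erase hb), hψ2 a (hall a hae)]
        exact haR
      · push Not at hall
        obtain ⟨a, hae, hai⟩ := hall
        have ha : π a = i + 1 := by have := h a hae; omega
        -- Two vertices of one edge conflict, so `a` is the only vertex of `e` in the part `i + 1`.
        have hothers : ∀ b ∈ e, b ≠ a → π b ≤ i := by
          intro b hb hba
          by_contra hcon
          have hbi : π b = i + 1 := by have := h b hb; omega
          refine hconf a b hba.symm (by omega) (by omega) ⟨e, he, e, he, hae, hb, ?_⟩
          exact Finset.not_disjoint_iff.mpr ⟨a, hae, hae⟩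
        refine Or.inr ⟨a, hae, by omega, ?_⟩
        rw [himg _ fun b hb => hothers b (mem_of_mem_erase hb) (ne_of_mem_erase hb), hψ1 a ha, ha]
        exact hgR ⟨a, ha⟩ _ (mem_image_of_mem _ (mem_filter.mpr ⟨he, hae, hothers⟩))

open Finset in
/-- The edges of the host with parts `0, …, M` of sizes `n`: the `r`-sets inside part `0`, the
`r`-sets containing one of the first `x` positions of part `0`, and for each part `i + 1` the sets
formed by a link and a position related to it by `R (i + 1)`. Sets of the wrong size, which arise
when the added vertex already belongs to the link, are discarded. -/
def hostEdges (r : ℕ) (n : ℕ → ℕ) (M x : ℕ) (R : ℕ → Finset (Finset (ℕ × ℕ) × ℕ)) :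
    Finset (Finset (ℕ × ℕ)) :=
  (powersetCard r (hostBelow n 1) ∪
    (range x ×ˢ powersetCard (r - 1) (hostBelow n (M + 1))).image
      (fun p => insert (0, p.1) p.2) ∪
    (range M).biUnion (fun i => (R (i + 1)).image (fun p => insert (i + 1, p.2) p.1))).filter
    (fun e => #e = r)

open Finset in
lemma card_hostEdges_le (r : ℕ) (n : ℕ → ℕ) (M x : ℕ) (R : ℕ → Finset (Finset (ℕ × ℕ) × ℕ)) :
    #(hostEdges r n M x R) ≤ n 0 ^ r + x * (#(hostBelow n (M + 1))) ^ (r - 1) +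
      ∑ i ∈ range M, #(R (i + 1)) := by
  refine (card_filter_le _ _).trans ((card_union_le _ _).trans ?_)
  refine Nat.add_le_add ((card_union_le _ _).trans (Nat.add_le_add ?_ ?_)) ?_
  · rw [card_powersetCard]
    refine (Nat.choose_le_pow _ _).trans (Nat.pow_le_pow_left ?_ _)
    simpa using card_hostBelow_le n 1
  · refine card_image_le.trans ?_
    rw [card_product, card_range, card_powersetCard]
    exact Nat.mul_le_mul_left _ (Nat.choose_le_pow _ _)
  · exact card_biUnion_le.trans (sum_le_sum fun i _ => card_image_le)

/-! ### The parameters of the host and its universality -/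

open Finset in
/-- An `r`-uniform hypergraph with at most `m` edges has at most `r * m / t` vertices of degree at
least `t`, by double counting. -/
lemma card_deg_ge {α : Type} [Fintype α] [DecidableEq α] (E : Finset (Finset α)) (r m t : ℕ)
    (hE : ∀ e ∈ E, #e = r) (hm : #E ≤ m) :
    #(univ.filter (fun a : α => t ≤ #(E.filter (fun e => a ∈ e)))) * t ≤ r * m := by
  calc _ = ∑ a ∈ univ.filter (fun a : α => t ≤ #(E.filter (fun e => a ∈ e))), t := by simp
    _ ≤ ∑ a ∈ univ.filter (fun a : α => t ≤ #(E.filter (fun e => a ∈ e))),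
          #(E.filter (fun e => a ∈ e)) := sum_le_sum fun a ha => (mem_filter.mp ha).2
    _ ≤ ∑ a : α, #(E.filter (fun e => a ∈ e)) :=
        sum_le_sum_of_subset (filter_subset _ _)
    _ = ∑ e ∈ E, #(univ.filter (fun a => a ∈ e)) :=
        sum_card_bipartiteAbove_eq_sum_card_bipartiteBelow (fun a e => a ∈ e)
    _ = #E * r := by
        rw [← smul_eq_mul, ← sum_const]
        exact sum_congr rfl fun e he => by simpa using hE e he
    _ ≤ r * m := by rw [mul_comm]; exact Nat.mul_le_mul_left _ hm

open Finset in
lemma exists_numbering {α : Type} [DecidableEq α] (s : Finset α) :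
    ∃ f : α → ℕ, (∀ a ∈ s, f a < #s) ∧ ∀ a ∈ s, ∀ b ∈ s, f a = f b → a = b := by
  refine ⟨fun a => if h : a ∈ s then s.equivFin ⟨a, h⟩ else 0, fun a ha => by simp [ha], ?_⟩
  intro a ha b hb h
  simp only [ha, hb, dif_pos] at h
  exact congrArg Subtype.val (s.equivFin.injective (Fin.ext h))

/-- The bound on the number of vertices in conflict with a given one; see `conflict_card`. -/
def confBound (r Δ : ℕ) : ℕ := (r * Δ) ^ 2

/-- The maximal number of guest vertices in one part of layer `u`. The layer has at most
`r * m / 2 ^ (S - u)` vertices, spread over parts as in `exists_capacity_coloring`. -/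
def partCap (r m S Δ u : ℕ) : ℕ := r * m / 2 ^ (S - u) / (confBound r Δ + 1) + 1

/-- The number of positions in each part. Part `0` has room for the vertices of degree at least
`Δ` followed by those of degree at least `2 ^ (S + 1)`. The later parts are grouped into
consecutive layers of `2 * (confBound r Δ + 1)` parts each, so part `i + 1` belongs to layer
`i / (2 * (confBound r Δ + 1))`; it is twice as large as the number of vertices it receives. -/
def partSize (r m S Δ : ℕ) : ℕ → ℕ
  | 0 => r * m / Δ + r * m / 2 ^ (S + 1)
  | i + 1 => 2 * partCap r m S Δ (i / (2 * (confBound r Δ + 1)))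

/-- The bound `2 ^ (S + 1 - u)` on the degrees of vertices in a part of layer `u`. The value at
part `0` plays no role. -/
def partDeg (r S Δ : ℕ) : ℕ → ℕ
  | 0 => 0
  | i + 1 => 2 ^ (S + 1 - i / (2 * (confBound r Δ + 1)))

open Finset in
/-- If the relations `R` are good, then the host contains every `r`-uniform hypergraph with at most
`m` edges and no isolated vertices. -/
lemma host_universal {α : Type} [Fintype α] [DecidableEq α] (r m S Δ : ℕ) (hr : 2 ≤ r)
    (hΔ : 2 ^ (S + 1) ≤ Δ) (EF : Finset (Finset α)) (hEF : ∀ e ∈ EF, #e = r) (hm : #EF ≤ m)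
    (hiso : ∀ v : α, ∃ e ∈ EF, v ∈ e) (R : ℕ → Finset (Finset (ℕ × ℕ) × ℕ))
    (hR : ∀ i < (S + 1) * (2 * (confBound r Δ + 1)),
      LinkGood (powersetCard (r - 1) (hostBelow (partSize r m S Δ) (i + 1)))
        (partSize r m S Δ (i + 1)) (partDeg r S Δ (i + 1)) (R (i + 1))) :
    ∃ φ : α → ℕ × ℕ, Function.Injective φ ∧
      (∀ a, φ a ∈ hostBelow (partSize r m S Δ) ((S + 1) * (2 * (confBound r Δ + 1)) + 1)) ∧
      ∀ e ∈ EF, e.image φ ∈ hostEdges r (partSize r m S Δ)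
        ((S + 1) * (2 * (confBound r Δ + 1))) (r * m / Δ) R := by
  set D := confBound r Δ with hD
  set L := 2 * (D + 1) with hL
  set n := partSize r m S Δ with hn
  have hLpos : 0 < L := by omega
  have hΔpos : 0 < Δ := lt_of_lt_of_le (by positivity) hΔ
  let deg : α → ℕ := fun a => #(EF.filter (fun e => a ∈ e))
  have hdegpos : ∀ a, deg a ≠ 0 := by
    intro a
    obtain ⟨e, he, hae⟩ := hiso a
    exact (card_pos.mpr ⟨e, mem_filter.mpr ⟨he, hae⟩⟩).ne'
  let lay : α → ℕ := fun a => S - Nat.log 2 (deg a)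
  have hlog : ∀ a, deg a < 2 ^ (S + 1) → Nat.log 2 (deg a) = S - lay a := by
    intro a ha
    have := Nat.log_lt_of_lt_pow (hdegpos a) ha
    exact (Nat.sub_sub_self (Nat.lt_succ_iff.mp this)).symm
  let E' := EF.filter (fun e => ∀ a ∈ e, deg a < Δ)
  have hE' : ∀ e ∈ E', #e = r := fun e he => hEF e (mem_filter.mp he).1
  have hdeg' : ∀ a, #(E'.filter (fun e => a ∈ e)) ≤ deg a := fun a =>
    card_le_card (filter_subset_filter _ (filter_subset _ _))
  -- Within each degree layer, `col` distributes the vertices over the parts of the layer. Only the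
  -- edges `E'` without vertices of degree at least `Δ` matter for conflicts.
  have hcol : ∀ u, ∃ col : α → ℕ, (∀ a, col a < L) ∧
      (∀ a ∈ univ.filter (fun a => deg a < 2 ^ (S + 1) ∧ lay a = u),
        ∀ b ∈ univ.filter (fun a => deg a < 2 ^ (S + 1) ∧ lay a = u), a ≠ b →
          Conflict E' a b → col a ≠ col b) ∧
      ∀ j, #((univ.filter (fun a => deg a < 2 ^ (S + 1) ∧ lay a = u)).filter
        (fun a => col a = j)) ≤ partCap r m S Δ u := by
    intro u
    refine exists_capacity_coloring (Conflict E') (fun a b h => h.symm) D _ _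
      (fun a _ => conflict_card r Δ hE' (fun e he v hv =>
        (hdeg' v).trans ((mem_filter.mp he).2 v hv).le) a) ?_
    have h1 : #(univ.filter (fun a => deg a < 2 ^ (S + 1) ∧ lay a = u)) ≤ r * m / 2 ^ (S - u) := by
      rw [Nat.le_div_iff_mul_le (by positivity)]
      refine le_trans (Nat.mul_le_mul_right _ (card_le_card ?_))
        (card_deg_ge EF r m (2 ^ (S - u)) hEF hm)
      intro a ha
      obtain ⟨-, h1, h2⟩ := mem_filter.mp ha
      refine mem_filter.mpr ⟨mem_univ _, ?_⟩
      rw [← h2, ← hlog a h1]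
      exact Nat.pow_log_le_self 2 (hdegpos a)
    refine h1.trans ?_
    simp only [partCap, ← hD]
    exact (Nat.lt_mul_div_succ _ (Nat.succ_pos D)).le
  choose col hcolL hcolP hcolC using hcol
  let π : α → ℕ := fun a => if deg a < 2 ^ (S + 1) then lay a * L + col (lay a) a + 1 else 0
  have hπ0 : ∀ a, π a = 0 ↔ 2 ^ (S + 1) ≤ deg a := by
    intro a
    simp only [π]
    split_ifs with h
    · exact iff_of_false (by simp) (not_le.mpr h)
    · exact iff_of_true (by simp) (not_lt.mp h)
  have hπs : ∀ a i, π a = i + 1 →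
      deg a < 2 ^ (S + 1) ∧ lay a = i / L ∧ col (i / L) a = i % L := by
    intro a i h
    simp only [π] at h
    split_ifs at h with h1
    have hlt := hcolL (lay a) a
    have h2 : lay a * L + col (lay a) a = i := by omega
    have h3 : i / L = lay a := by
      rw [← h2, mul_comm, Nat.mul_add_div hLpos, Nat.div_eq_of_lt hlt, add_zero]
    have h4 : i % L = col (lay a) a := by
      rw [← h2, mul_comm, Nat.mul_add_mod, Nat.mod_eq_of_lt hlt]
    exact ⟨h1, h3.symm, by rw [h3, h4]⟩
  have hπM : ∀ a, π a ≤ (S + 1) * L := by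
    intro a
    simp only [π]
    split_ifs with h
    · have hlt := hcolL (lay a) a
      have : lay a ≤ S := Nat.sub_le _ _
      calc lay a * L + col (lay a) a + 1 ≤ S * L + L := by
            have := Nat.mul_le_mul_right L this; omega
        _ = _ := by ring
    · omega
  -- In the base, vertices of degree at least `Δ` occupy the first `r * m / Δ` positions.
  obtain ⟨f1, hf1, hf1i⟩ := exists_numbering (univ.filter (fun a => Δ ≤ deg a))
  obtain ⟨f2, hf2, hf2i⟩ := exists_numbering (univ.filter (fun a => 2 ^ (S + 1) ≤ deg a))
  have hc1 : #(univ.filter (fun a => Δ ≤ deg a)) ≤ r * m / Δ := by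
    rw [Nat.le_div_iff_mul_le hΔpos]; exact card_deg_ge EF r m Δ hEF hm
  have hc2 : #(univ.filter (fun a => 2 ^ (S + 1) ≤ deg a)) ≤ r * m / 2 ^ (S + 1) := by
    rw [Nat.le_div_iff_mul_le (by positivity)]; exact card_deg_ge EF r m _ hEF hm
  simp only [mem_filter, mem_univ, true_and] at hf1 hf1i hf2 hf2i
  let φ0 : α → ℕ := fun a => if Δ ≤ deg a then f1 a else r * m / Δ + f2 a
  have hφX : ∀ a, Δ ≤ deg a → φ0 a < r * m / Δ := fun a ha => by
    simp only [φ0, if_pos ha]; exact (hf1 a ha).trans_le hc1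
  obtain ⟨φ, hφlt, hφinj, hφ0, hφE⟩ := exists_embedding E' r hr hE' π n (partDeg r S Δ)
    ((S + 1) * L) R hR (by
      intro i hi
      simp only [hn, partSize, ← hD, ← hL]
      refine Nat.mul_le_mul_left 2 (le_trans (card_le_card ?_) (hcolC (i / L) (i % L)))
      intro a ha
      obtain ⟨h1, h2, h3⟩ := hπs a i (mem_filter.mp ha).2
      simp only [mem_filter, mem_univ, true_and]
      exact ⟨⟨h1, h2⟩, h3⟩)
    (by
      intro a ha
      obtain ⟨i, hi⟩ := Nat.exists_eq_succ_of_ne_zero ha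
      obtain ⟨h1, h2, -⟩ := hπs a i hi
      rw [hi]
      simp only [partDeg, ← hD, ← hL, ← h2]
      have h3 : lay a ≤ S := Nat.sub_le _ _
      rw [Nat.succ_sub h3, ← hlog a h1]
      exact (hdeg' a).trans (Nat.lt_pow_succ_log_self (by norm_num) _).le)
    (by
      intro a b hab hπab ha hc
      obtain ⟨i, hi⟩ := Nat.exists_eq_succ_of_ne_zero ha
      obtain ⟨h1, h2, h3⟩ := hπs a i hi
      obtain ⟨h1', h2', h3'⟩ := hπs b i (hπab ▸ hi)
      exact hcolP (i / L) a (by simp [h1, h2]) b (by simp [h1', h2']) hab hc (h3.trans h3'.symm))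
    φ0 (by
      intro a ha
      rw [hπ0] at ha
      simp only [hn, partSize]
      by_cases h : Δ ≤ deg a
      · exact (hφX a h).trans_le (Nat.le_add_right _ _)
      · simp only [φ0, if_neg h]
        have := hf2 a ha
        omega)
    (by
      intro a b ha hb h
      rw [hπ0] at ha hb
      by_cases h1 : Δ ≤ deg a
      · by_cases h2 : Δ ≤ deg b
        · simp only [φ0, if_pos h1, if_pos h2] at h
          exact hf1i a h1 b h2 h
        · have := hφX a h1
          simp only [h, φ0, if_neg h2] at this
          omega
      · by_cases h2 : Δ ≤ deg b
        · have := hφX b h2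
          simp only [← h, φ0, if_neg h1] at this
          omega
        · simp only [φ0, if_neg h1, if_neg h2] at h
          exact hf2i a ha b hb (by omega))
    ((S + 1) * L) le_rfl
  have hinj : Function.Injective (fun a => (π a, φ a)) := by
    intro a b hab
    simp only [Prod.mk.injEq] at hab
    exact hφinj a b (hπM a) hab.1 hab.2
  have hmem : ∀ a, (π a, φ a) ∈ hostBelow n ((S + 1) * L + 1) := fun a =>
    mem_hostBelow.mpr ⟨Nat.lt_succ_of_le (hπM a), hφlt a (hπM a)⟩
  refine ⟨fun a => (π a, φ a), hinj, hmem, ?_⟩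
  intro e he
  have hecard : #(e.image (fun a => (π a, φ a))) = r := by
    rw [card_image_of_injective _ hinj, hEF e he]
  rw [hostEdges, mem_filter]
  refine ⟨?_, hecard⟩
  -- An edge through a vertex of degree at least `Δ` contains one of the first base positions; any
  -- other edge belongs to `E'` and is covered by `exists_embedding`.
  simp only [mem_union]
  by_cases hbig : ∀ a ∈ e, deg a < Δ
  · rcases hφE e (mem_filter.mpr ⟨he, hbig⟩) (fun a _ => hπM a) with h | ⟨a, hae, ha0, haR⟩
    · refine Or.inl (Or.inl (mem_powersetCard.mpr ⟨?_, hecard⟩))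
      intro p hp
      obtain ⟨a, hae, rfl⟩ := mem_image.mp hp
      have := hφlt a (hπM a)
      rw [mem_hostBelow]
      exact ⟨by simp [h a hae], this⟩
    · right
      obtain ⟨i, hi⟩ := Nat.exists_eq_succ_of_ne_zero ha0
      refine mem_biUnion.mpr ⟨i, mem_range.mpr (by have := hπM a; omega), ?_⟩
      rw [hi] at haR
      refine mem_image.mpr ⟨_, haR, ?_⟩
      have : (i + 1, φ a) = (π a, φ a) := by rw [hi]
      simp only [this]
      rw [← image_insert (fun a => (π a, φ a)), insert_erase hae]
  · push Not at hbig
    obtain ⟨a, hae, ha⟩ := hbig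
    have ha0 : π a = 0 := (hπ0 a).mpr (hΔ.trans ha)
    refine Or.inl (Or.inr (mem_image.mpr
      ⟨(φ a, (e.erase a).image (fun a => (π a, φ a))), ?_, ?_⟩))
    · rw [mem_product, mem_range, mem_powersetCard]
      refine ⟨by simp only [hφ0 a ha0]; exact hφX a ha, ?_, ?_⟩
      · intro p hp
        obtain ⟨b, _, rfl⟩ := mem_image.mp hp
        exact hmem b
      · rw [card_image_of_injective _ hinj, card_erase_of_mem hae, hEF e he]
    · have : ((0 : ℕ), φ a) = (π a, φ a) := by rw [ha0]
      simp only [this]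
      rw [← image_insert (fun a => (π a, φ a)), insert_erase hae]

/-! ### Sizes of the host parts -/

open Finset in
lemma sum_range_mul_div (L : ℕ) (hL : 0 < L) (f : ℕ → ℝ) (U : ℕ) :
    ∑ i ∈ range (U * L), f (i / L) = ∑ u ∈ range U, (L : ℝ) * f u := by
  induction U with
  | zero => simp
  | succ U ih =>
    rw [Nat.succ_mul, sum_range_add, ih, sum_range_succ]
    congr 1
    rw [sum_congr rfl (g := fun _ => f U), sum_const, card_range, nsmul_eq_mul]
    intro i hi
    rw [mul_comm, Nat.mul_add_div hL, Nat.div_eq_of_lt (mem_range.mp hi), add_zero]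

lemma two_pow_sub_eq {S u : ℕ} (hu : u ≤ S) : (2 : ℝ) ^ S = 2 ^ (S - u) * 2 ^ u := by
  rw [← pow_add, Nat.sub_add_cancel hu]

/-- The parts are large: their capacity is at least `m / (2 ^ S * (D + 1))`
with `D = confBound r Δ`. -/
lemma partCap_lower (r m S Δ u : ℕ) (hr : 1 ≤ r) :
    m ≤ 2 ^ S * ((confBound r Δ + 1) * partCap r m S Δ u) := by
  set D := confBound r Δ with hD
  have h1 : r * m < 2 ^ (S - u) * (r * m / 2 ^ (S - u) + 1) :=
    Nat.lt_mul_div_succ _ (by positivity)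
  have h2 : r * m / 2 ^ (S - u) < (D + 1) * partCap r m S Δ u :=
    Nat.lt_mul_div_succ _ (Nat.succ_pos D)
  calc m ≤ r * m := Nat.le_mul_of_pos_left _ hr
    _ ≤ 2 ^ (S - u) * (r * m / 2 ^ (S - u) + 1) := h1.le
    _ ≤ 2 ^ S * ((D + 1) * partCap r m S Δ u) :=
      Nat.mul_le_mul (Nat.pow_le_pow_right (by norm_num) (Nat.sub_le _ _)) h2

/-- The parts of layer `u` have total size `O(m * 2 ^ u / 2 ^ S)`. The hypothesis `hD` absorbs the
rounding in `partCap`. -/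
lemma partCap_upper (r m S Δ u : ℕ) (hr : 1 ≤ r) (hu : u ≤ S)
    (hD : (confBound r Δ + 1) * 2 ^ S ≤ m) :
    ((2 * (confBound r Δ + 1) : ℕ) : ℝ) * (2 * partCap r m S Δ u : ℕ) ≤
      8 * (r * m / 2 ^ S) * 2 ^ u := by
  set D := confBound r Δ with hDdef
  have h1 : (D + 1) * partCap r m S Δ u ≤ r * m / 2 ^ (S - u) + (D + 1) := by
    simp only [partCap, ← hDdef, mul_add, mul_one]
    gcongr
    exact Nat.mul_div_le _ _
  have h2 : ((r * m / 2 ^ (S - u) : ℕ) : ℝ) ≤ r * m / 2 ^ S * 2 ^ u := by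
    refine Nat.cast_div_le.trans (le_of_eq ?_)
    rw [two_pow_sub_eq hu]; push_cast; field_simp
  have h3 : ((D : ℝ) + 1) ≤ r * m / 2 ^ S * 2 ^ u := by
    have h4 : ((D : ℝ) + 1) * 2 ^ S ≤ m := by exact_mod_cast hD
    have h5 : (m : ℝ) ≤ r * m := le_mul_of_one_le_left (by positivity) (by exact_mod_cast hr)
    calc ((D : ℝ) + 1) ≤ r * m / 2 ^ S := by rw [le_div_iff₀ (by positivity)]; linarith
      _ ≤ _ := le_mul_of_one_le_right (by positivity) (one_le_pow₀ (by norm_num))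
  have h1' : ((D : ℝ) + 1) * partCap r m S Δ u ≤ (r * m / 2 ^ (S - u) : ℕ) + ((D : ℝ) + 1) := by
    exact_mod_cast h1
  push_cast
  nlinarith

open Finset in
/-- The base and the layers `0, …, u` together have size `O(m * 2 ^ u / 2 ^ S)`. -/
lemma sum_partSize (r m S Δ u i : ℕ) (hr : 1 ≤ r) (hu : u ≤ S) (hΔ : 2 ^ (S + 1) ≤ Δ)
    (hD : (confBound r Δ + 1) * 2 ^ S ≤ m) (hi : i ≤ (u + 1) * (2 * (confBound r Δ + 1))) :
    ((∑ j ∈ range (i + 1), partSize r m S Δ j : ℕ) : ℝ) ≤ 16 * (r * m / 2 ^ S) * 2 ^ u := by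
  set D := confBound r Δ with hDdef
  set w : ℝ := r * m / 2 ^ S with hw
  have hw0 : 0 ≤ w := by positivity
  have h0 : (partSize r m S Δ 0 : ℝ) ≤ w := by
    simp only [partSize]
    push_cast
    have h1 : ((r * m / Δ : ℕ) : ℝ) ≤ r * m / 2 ^ (S + 1) := by
      refine Nat.cast_div_le.trans ?_
      push_cast
      gcongr
      exact_mod_cast hΔ
    have h2 : ((r * m / 2 ^ (S + 1) : ℕ) : ℝ) ≤ r * m / 2 ^ (S + 1) := by
      refine Nat.cast_div_le.trans (le_of_eq ?_); push_cast; ring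
    have h3 : (r * m / 2 ^ (S + 1) : ℝ) = w / 2 := by rw [hw, pow_succ]; field_simp
    linarith
  have h1 : (∑ j ∈ range i, (partSize r m S Δ (j + 1) : ℝ)) ≤
      ∑ v ∈ range (u + 1), 8 * w * 2 ^ v := by
    calc _ ≤ ∑ j ∈ range ((u + 1) * (2 * (D + 1))), (partSize r m S Δ (j + 1) : ℝ) :=
          sum_le_sum_of_subset_of_nonneg (range_mono hi) (fun _ _ _ => by positivity)
      _ = ∑ v ∈ range (u + 1), ((2 * (D + 1) : ℕ) : ℝ) * (2 * partCap r m S Δ v : ℕ) :=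
          sum_range_mul_div (2 * (D + 1)) (by omega)
            (fun v => ((2 * partCap r m S Δ v : ℕ) : ℝ)) (u + 1)
      _ ≤ _ := by
          refine sum_le_sum fun v hv => ?_
          have := mem_range.mp hv
          exact partCap_upper r m S Δ v hr (by omega) hD
  have h2 : ∀ u : ℕ, ∑ v ∈ range (u + 1), (2 : ℝ) ^ v = 2 * 2 ^ u - 1 := by
    intro u
    induction u with
    | zero => norm_num
    | succ u ih => rw [sum_range_succ, ih, pow_succ]; ring
  rw [← mul_sum, h2] at h1
  push_cast
  rw [sum_range_succ']
  linarith

/-- With `k = 2 ^ ⌊2 ^ u / 4⌋` and `d = 2 ^ (S + 1 - u)`, the power `k ^ d` governing the union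
bound is at most `2 ^ (Q / 2)` for every layer `u`, where `Q = 2 ^ S`. -/
lemma pow_partDeg_le (S u : ℕ) (hu : u ≤ S) :
    (2 ^ (2 ^ u / 4)) ^ (2 ^ (S + 1 - u)) ≤ 2 ^ (2 ^ S / 2) := by
  rw [← pow_mul]
  apply Nat.pow_le_pow_right (by norm_num)
  rw [Nat.le_div_iff_mul_le (by norm_num)]
  have h1 : 2 ^ (S + 1 - u) * 2 ^ u = 2 * 2 ^ S := by
    rw [← pow_add, Nat.sub_add_cancel (by omega), pow_succ]; ring
  have h2 : 2 ^ u / 4 * 4 ≤ 2 ^ u := Nat.div_mul_le_self _ _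
  have h3 := Nat.mul_le_mul_left (2 ^ (S + 1 - u)) h2
  nlinarith

/-! ### The union bound for large parameters -/

/-- `S` is large compared to `r`: with `Q = 2 ^ S`, the quantity `2 ^ (Q / 2)`, which is at most
`√m` when `2 ^ Q ≤ m`, exceeds a polynomial in `Q` chosen to dominate all polynomial
losses in the union bound. -/
def Large (r S : ℕ) : Prop :=
  16 * r * ((7 * 2 ^ S + 6 * (2 ^ S) ^ 2 * r) *
    (2 ^ S * (confBound r ((2 * 2 ^ S) ^ r) + 1))) ≤ 2 ^ (2 ^ S / 2)

lemma Large.conf {r S : ℕ} (h : Large r S) (hr : 1 ≤ r) :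
    (confBound r ((2 * 2 ^ S) ^ r) + 1) * 2 ^ S ≤ 2 ^ 2 ^ S := by
  have h0 : 1 ≤ 2 ^ S := Nat.one_le_two_pow
  have h1 : 2 ^ (2 ^ S / 2) ≤ 2 ^ 2 ^ S :=
    Nat.pow_le_pow_right (by norm_num) (Nat.div_le_self _ _)
  refine le_trans ?_ (h.trans h1)
  calc _ = 1 * (1 * (2 ^ S * (confBound r ((2 * 2 ^ S) ^ r) + 1))) := by ring
    _ ≤ _ := by gcongr <;> nlinarith [Nat.zero_le (6 * (2 ^ S) ^ 2 * r)]

lemma Large.r_le {r S : ℕ} (h : Large r S) : 16 * r ≤ 2 ^ 2 ^ S := by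
  have h0 : 1 ≤ 2 ^ S := Nat.one_le_two_pow
  have h1 : 2 ^ (2 ^ S / 2) ≤ 2 ^ 2 ^ S :=
    Nat.pow_le_pow_right (by norm_num) (Nat.div_le_self _ _)
  refine le_trans ?_ (h.trans h1)
  refine Nat.le_mul_of_pos_right _ ?_
  positivity

/-- The hypothesis of `exists_linkGood` holds in every layer. With `Q = 2 ^ S`, the left-hand side
is at most `2 ^ (7 * Q + 6 * Q ^ 2 * r)`, whereas the exponent on the right is at least `√m` divided
by a polynomial in `Q`. The number `N` stands for the number of links. -/
lemma exp_condition (r m S u N : ℕ) (hr : 2 ≤ r) (hu : u ≤ S) (hL : Large r S)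
    (hm1 : 2 ^ 2 ^ S ≤ m) (hm2 : m ≤ 2 ^ (2 * 2 ^ S)) (hN : (N : ℝ) ≤ (16 * (r * m)) ^ (r - 1)) :
    ((2 ^ (2 ^ u / 4) : ℕ) : ℝ) *
        ((2 * partCap r m S ((2 * 2 ^ S) ^ r) u : ℕ) : ℝ) ^ 2 *
        ((N : ℝ) + 1) ^ (2 ^ (S + 1 - u)) <
      Real.exp (((2 * partCap r m S ((2 * 2 ^ S) ^ r) u : ℕ) : ℝ) /
        (2 * ((2 ^ (2 ^ u / 4) : ℕ) : ℝ) ^ (2 ^ (S + 1 - u)))) := by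
  set Q := 2 ^ S with hQ
  set Δ := (2 * Q) ^ r with hΔ
  set c := partCap r m S Δ u with hc
  have hQ1 : 1 ≤ Q := Nat.one_le_two_pow
  have hconf := (hL.conf (by omega)).trans hm1
  have hu2 : 2 ^ u ≤ Q := Nat.pow_le_pow_right (by norm_num) hu
  have hm0 : 1 ≤ m := le_trans Nat.one_le_two_pow hm1
  have hB : (16 * (r * m) : ℝ) ≤ 2 ^ (3 * Q) := by
    have h1 : 16 * r * m ≤ 2 ^ Q * 2 ^ (2 * Q) := Nat.mul_le_mul hL.r_le hm2
    have h2 : (2 : ℕ) ^ Q * 2 ^ (2 * Q) = 2 ^ (3 * Q) := by rw [← pow_add]; congr 1; ring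
    rw [h2] at h1
    rw [← mul_assoc]
    exact_mod_cast h1
  have hB1 : (2 : ℝ) ≤ 16 * (r * m) := by
    have : (2 : ℝ) ≤ r := by exact_mod_cast hr
    have : (1 : ℝ) ≤ m := by exact_mod_cast hm0
    nlinarith
  have hk : ((2 ^ (2 ^ u / 4) : ℕ) : ℝ) ≤ 2 ^ Q := by
    push_cast
    exact pow_le_pow_right₀ (by norm_num) ((Nat.div_le_self _ _).trans hu2)
  -- The bounds `hk`, `hn`, `hT` are for the three factors of the left-hand side.
  have hn : ((2 * c : ℕ) : ℝ) ≤ 2 ^ (3 * Q) := by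
    refine le_trans ?_ hB
    have h1 := partCap_upper r m S Δ u (by omega) hu hconf
    rw [← hc] at h1
    have h2 : (1 : ℝ) ≤ ((2 * (confBound r Δ + 1) : ℕ) : ℝ) := by
      exact_mod_cast (by omega : 1 ≤ 2 * (confBound r Δ + 1))
    have h3 : (8 * (r * m / 2 ^ S) * 2 ^ u : ℝ) ≤ 8 * (r * m) := by
      rw [two_pow_sub_eq hu]
      have h4 : (1 : ℝ) ≤ 2 ^ (S - u) := one_le_pow₀ (by norm_num)
      have h5 : (8 * (r * m / (2 ^ (S - u) * 2 ^ u)) * 2 ^ u : ℝ) = 8 * (r * m) / 2 ^ (S - u) := by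
        field_simp
      rw [h5]
      exact div_le_self (by positivity) h4
    have h6 : ((2 * c : ℕ) : ℝ) ≤ ((2 * (confBound r Δ + 1) : ℕ) : ℝ) * (2 * c : ℕ) :=
      le_mul_of_one_le_left (by positivity) h2
    have h7 : (0 : ℝ) ≤ r * m := by positivity
    linarith
  have hT : ((N : ℝ) + 1) ^ (2 ^ (S + 1 - u)) ≤ 2 ^ (6 * Q ^ 2 * r) := by
    have h1 : (N : ℝ) + 1 ≤ 2 ^ (3 * Q * r) := by
      calc (N : ℝ) + 1 ≤ (16 * (r * m)) ^ (r - 1) + (16 * (r * m)) ^ (r - 1) := by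
            gcongr; exact one_le_pow₀ (by linarith)
        _ = (16 * (r * m)) ^ (r - 1) * 2 := by ring
        _ ≤ (16 * (r * m)) ^ (r - 1) * (16 * (r * m)) := by gcongr
        _ = (16 * (r * m)) ^ r := by rw [← pow_succ, Nat.sub_add_cancel (by omega)]
        _ ≤ (2 ^ (3 * Q)) ^ r := by gcongr
        _ = _ := by rw [← pow_mul]
    calc ((N : ℝ) + 1) ^ (2 ^ (S + 1 - u)) ≤ (2 ^ (3 * Q * r)) ^ (2 ^ (S + 1 - u)) := by gcongr
      _ = 2 ^ (3 * Q * r * 2 ^ (S + 1 - u)) := by rw [← pow_mul]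
      _ ≤ 2 ^ (3 * Q * r * (2 * Q)) := by
          refine pow_le_pow_right₀ (by norm_num) (Nat.mul_le_mul_left _ ?_)
          rw [hQ, ← pow_succ']
          exact Nat.pow_le_pow_right (by norm_num) (Nat.sub_le _ _)
      _ = _ := by congr 1; ring
  have hE : ((7 * Q + 6 * Q ^ 2 * r : ℕ) : ℝ) ≤
      ((2 * c : ℕ) : ℝ) / (2 * ((2 ^ (2 ^ u / 4) : ℕ) : ℝ) ^ (2 ^ (S + 1 - u))) := by
    set κ := (2 ^ (2 ^ u / 4)) ^ (2 ^ (S + 1 - u)) with hκ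
    have hκ1 : κ ≤ 2 ^ (Q / 2) := pow_partDeg_le S u hu
    have hlow : m ≤ Q * ((confBound r Δ + 1) * c) := partCap_lower r m S Δ u (by omega)
    have hhalf : 2 ^ (Q / 2) * 2 ^ (Q / 2) ≤ 2 ^ Q := by
      rw [← pow_add]; exact Nat.pow_le_pow_right (by norm_num) (by omega)
    have hL' : (7 * Q + 6 * Q ^ 2 * r) * (Q * (confBound r Δ + 1)) ≤ 2 ^ (Q / 2) :=
      le_trans (Nat.le_mul_of_pos_left _ (by omega)) hL
    have hfin : (7 * Q + 6 * Q ^ 2 * r) * κ ≤ c := by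
      have h1 : (7 * Q + 6 * Q ^ 2 * r) * κ * (Q * (confBound r Δ + 1)) ≤
          c * (Q * (confBound r Δ + 1)) := by
        calc _ = (7 * Q + 6 * Q ^ 2 * r) * (Q * (confBound r Δ + 1)) * κ := by ring
          _ ≤ 2 ^ (Q / 2) * 2 ^ (Q / 2) := Nat.mul_le_mul hL' hκ1
          _ ≤ m := hhalf.trans hm1
          _ ≤ _ := hlow.trans (le_of_eq (by ring))
      exact Nat.le_of_mul_le_mul_right h1 (by positivity)
    have hκpos : (0 : ℝ) < κ := by positivity
    have hκc : ((2 ^ (2 ^ u / 4) : ℕ) : ℝ) ^ (2 ^ (S + 1 - u)) = (κ : ℝ) := by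
      rw [hκ]; push_cast; rfl
    rw [hκc, le_div_iff₀ (by positivity)]
    have : (((7 * Q + 6 * Q ^ 2 * r) * κ : ℕ) : ℝ) ≤ c := by exact_mod_cast hfin
    push_cast at this ⊢
    linarith
  have he : (2 : ℝ) < Real.exp 1 := by have := Real.exp_one_gt_d9; linarith
  calc _ ≤ (2 : ℝ) ^ Q * (2 ^ (3 * Q)) ^ 2 * 2 ^ (6 * Q ^ 2 * r) := by gcongr
    _ = 2 ^ (7 * Q + 6 * Q ^ 2 * r) := by rw [← pow_mul, ← pow_add, ← pow_add]; congr 1; ring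
    _ < Real.exp 1 ^ (7 * Q + 6 * Q ^ 2 * r) := by
        refine pow_lt_pow_left₀ he (by norm_num) ?_
        have : 0 < 6 * Q ^ 2 * r := by positivity
        omega
    _ = Real.exp ((7 * Q + 6 * Q ^ 2 * r : ℕ) : ℝ) := by rw [← Real.exp_nat_mul, mul_one]
    _ ≤ _ := Real.exp_le_exp.mpr hE

lemma exists_large (r : ℕ) : ∃ S0, ∀ S ≥ S0, Large r S := by
  set A : ℕ := 16 * r * ((7 + 6 * r) * (r ^ 2 * 4 ^ r + 1)) * 2 ^ (2 * r + 3) with hA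
  have hlim := tendsto_pow_const_div_const_pow_of_one_lt (2 * r + 3) (one_lt_two : (1 : ℝ) < 2)
  have hev := hlim.eventually (gt_mem_nhds (show (0 : ℝ) < 1 / (A + 1) by positivity))
  obtain ⟨y0, hy0⟩ := Filter.eventually_atTop.mp hev
  refine ⟨y0 + 1, fun S hS => ?_⟩
  obtain ⟨T, rfl⟩ : ∃ T, S = T + 1 := ⟨S - 1, by omega⟩
  have hy : y0 ≤ 2 ^ T := le_trans (by omega) (Nat.lt_two_pow_self (n := T)).le
  have h1 := hy0 _ hy
  rw [div_lt_div_iff₀ (by positivity) (by positivity), one_mul] at h1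
  have h2 : (2 ^ T) ^ (2 * r + 3) * (A + 1) < 2 ^ 2 ^ T := by exact_mod_cast h1
  have hQ : 2 ^ (T + 1) / 2 = 2 ^ T := by rw [pow_succ]; simp
  unfold Large confBound
  rw [hQ]
  refine le_trans ?_ h2.le
  have hQ1 : 1 ≤ 2 ^ (T + 1) := Nat.one_le_two_pow
  have hAy : (2 ^ T) ^ (2 * r + 3) * A =
      16 * r * ((7 + 6 * r) * (r ^ 2 * 4 ^ r + 1)) * (2 ^ (T + 1)) ^ (2 * r + 3) := by
    rw [hA, pow_succ 2 T, mul_pow]; ring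
  refine le_trans ?_ (Nat.mul_le_mul_left _ (Nat.le_succ A))
  rw [hAy]
  generalize 2 ^ (T + 1) = q at *
  have e1 : 7 * q + 6 * q ^ 2 * r ≤ (7 + 6 * r) * q ^ 2 := by nlinarith
  have e2 : (r * (2 * q) ^ r) ^ 2 + 1 ≤ (r ^ 2 * 4 ^ r + 1) * q ^ (2 * r) := by
    have : 1 ≤ q ^ (2 * r) := Nat.one_le_pow _ _ hQ1
    have e3 : (r * (2 * q) ^ r) ^ 2 = r ^ 2 * 4 ^ r * q ^ (2 * r) := by
      rw [mul_pow, ← pow_mul, mul_pow, mul_comm r 2, pow_mul 2 2 r]; norm_num; ring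
    rw [e3, add_mul, one_mul]; omega
  calc _ ≤ 16 * r * (((7 + 6 * r) * q ^ 2) * (q * ((r ^ 2 * 4 ^ r + 1) * q ^ (2 * r)))) := by
        gcongr
    _ = _ := by ring

/-- Applied to `y = 2 ^ u`, this makes the edge counts of the layers decay geometrically. -/
lemma exists_pow_bound (r : ℕ) : ∃ C : ℝ, 0 < C ∧ ∀ y : ℕ, (y : ℝ) ^ (r + 1) ≤ C * 2 ^ (y / 4) := by
  have hlim := tendsto_pow_const_div_const_pow_of_one_lt (r + 1) (one_lt_two : (1 : ℝ) < 2)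
  obtain ⟨B, hB⟩ := hlim.bddAbove_range
  have hB' : ∀ w : ℕ, (w : ℝ) ^ (r + 1) ≤ B * 2 ^ w := fun w => by
    have := hB ⟨w, rfl⟩
    rwa [div_le_iff₀ (by positivity)] at this
  have hBpos : 0 < B := by have := hB' 1; norm_num at this; linarith
  refine ⟨4 ^ (r + 1) * (B * 2), by positivity, fun y => ?_⟩
  have h1 : (y : ℝ) ≤ 4 * ((y / 4 + 1 : ℕ) : ℝ) := by
    exact_mod_cast (by omega : y ≤ 4 * (y / 4 + 1))
  calc (y : ℝ) ^ (r + 1) ≤ (4 * ((y / 4 + 1 : ℕ) : ℝ)) ^ (r + 1) := by gcongr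
    _ = 4 ^ (r + 1) * ((y / 4 + 1 : ℕ) : ℝ) ^ (r + 1) := mul_pow _ _ _
    _ ≤ 4 ^ (r + 1) * (B * 2 ^ (y / 4 + 1)) := by gcongr; exact hB' _
    _ = _ := by rw [pow_succ]; ring

/-! ### Counting edges -/

open Finset in
/-- A hypergraph on vertices `ℕ × ℕ` containing all guests within a finite vertex set `W` can be
transported to a vertex set `Fin N`. -/
lemma universal_of_pairs (r m : ℕ) (W : Finset (ℕ × ℕ)) (EH : Finset (Finset (ℕ × ℕ)))
    (h : ∀ (k : ℕ) (EF : Finset (Finset (Fin k))), (∀ e ∈ EF, #e = r) → #EF ≤ m →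
      (∀ v : Fin k, ∃ e ∈ EF, v ∈ e) →
      ∃ φ : Fin k → ℕ × ℕ, Function.Injective φ ∧ (∀ a, φ a ∈ W) ∧ ∀ e ∈ EF, e.image φ ∈ EH) :
    ∃ (N : ℕ) (EH' : Finset (Finset (Fin N))), (∀ e ∈ EH', #e = r) ∧ #EH' ≤ #EH ∧
      EdgeUniversal r m N EH' := by
  refine ⟨#W, (EH.image (fun e => (e.subtype (· ∈ W)).image W.equivFin)).filter
    (fun e => #e = r), fun e he => (mem_filter.mp he).2,
    (card_filter_le _ _).trans card_image_le, ?_⟩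
  intro k EF hEF hm hiso
  obtain ⟨φ, hinj, hW, hφ⟩ := h k EF hEF hm hiso
  have hinj' : Function.Injective (fun a => W.equivFin ⟨φ a, hW a⟩) := fun a b hab =>
    hinj (congrArg Subtype.val (W.equivFin.injective hab))
  refine ⟨_, hinj', fun e he => mem_filter.mpr ⟨mem_image.mpr ⟨_, hφ e he, ?_⟩, ?_⟩⟩
  · ext x
    simp only [mem_image, mem_subtype]
    constructor
    · rintro ⟨⟨p, hp⟩, ⟨a, ha, rfl⟩, rfl⟩
      exact ⟨a, ha, rfl⟩
    · rintro ⟨a, ha, rfl⟩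
      exact ⟨⟨φ a, hW a⟩, ⟨a, ha, rfl⟩, rfl⟩
  · rw [card_image_of_injective _ hinj', hEF e he]

open Finset in
lemma universal_complete (r m : ℕ) :
    EdgeUniversal r m (r * m) (powersetCard r (univ : Finset (Fin (r * m)))) := by
  intro k EF hEF hm hiso
  have hk : k ≤ r * m := by
    have h1 : (univ : Finset (Fin k)) ⊆ EF.biUnion id := fun v _ => by
      obtain ⟨e, he, hv⟩ := hiso v
      exact mem_biUnion.mpr ⟨e, he, hv⟩
    have h2 := card_le_card h1
    rw [card_univ, Fintype.card_fin] at h2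
    calc k ≤ #EF * r := h2.trans (card_biUnion_le_card_mul _ _ _ fun e he => (hEF e he).le)
      _ ≤ r * m := by rw [mul_comm]; exact Nat.mul_le_mul_left _ hm
  refine ⟨Fin.castLE hk, Fin.castLE_injective hk, fun e he => ?_⟩
  rw [mem_powersetCard]
  exact ⟨subset_univ _, by rw [card_image_of_injective _ (Fin.castLE_injective hk), hEF e he]⟩

open Finset in
/-- With `Q = 2 ^ S`, the host has `O((m / Q) ^ r)` edges: the base, the edges through its first
positions, and the layers each contribute that much. -/
lemma universal_large (r : ℕ) (hr : 2 ≤ r) (C : ℝ)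
    (hC : ∀ y : ℕ, (y : ℝ) ^ (r + 1) ≤ C * 2 ^ (y / 4)) (m S : ℕ) (hL : Large r S)
    (hm1 : 2 ^ 2 ^ S ≤ m) (hm2 : m ≤ 2 ^ (2 * 2 ^ S)) :
    ∃ (N : ℕ) (EH : Finset (Finset (Fin N))), (∀ e ∈ EH, #e = r) ∧
      (#EH : ℝ) ≤ (2 + 2 * C) * (16 * (r * m / 2 ^ S)) ^ r ∧ EdgeUniversal r m N EH := by
  set Δ := (2 * 2 ^ S) ^ r with hΔdef
  have hQ1 : 1 ≤ 2 ^ S := Nat.one_le_two_pow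
  have hΔ : 2 ^ (S + 1) ≤ Δ := by
    rw [hΔdef, ← pow_succ']
    exact Nat.le_self_pow (by omega) _
  have hD := (hL.conf (by omega)).trans hm1
  rw [← hΔdef] at hD
  set D := confBound r Δ with hDdef
  set L := 2 * (D + 1) with hLdef
  have hLpos : 0 < L := by omega
  set n := partSize r m S Δ with hn
  set w : ℝ := r * m / 2 ^ S with hw
  have hw0 : 0 ≤ w := by positivity
  have hC0 : 0 ≤ C := by have := hC 0; simp at this; exact this
  have hlay : ∀ i < (S + 1) * L, i / L ≤ S := fun i hi =>
    Nat.lt_succ_iff.mp ((Nat.div_lt_iff_lt_mul hLpos).mpr hi)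
  have hbelow : ∀ i < (S + 1) * L,
      (#(hostBelow n (i + 1)) : ℝ) ≤ 16 * w * 2 ^ (i / L) := by
    intro i hi
    refine le_trans (by exact_mod_cast card_hostBelow_le n (i + 1))
      (sum_partSize r m S Δ (i / L) i (by omega) (hlay i hi) hΔ hD ?_)
    rw [← hDdef, ← hLdef, mul_comm]
    exact (Nat.lt_mul_div_succ i hLpos).le
  have hT : ∀ i < (S + 1) * L, (#(powersetCard (r - 1) (hostBelow n (i + 1))) : ℝ) ≤
      (16 * w * 2 ^ (i / L)) ^ (r - 1) := by
    intro i hi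
    rw [card_powersetCard]
    calc _ ≤ ((#(hostBelow n (i + 1)) : ℝ)) ^ (r - 1) := by
          exact_mod_cast Nat.choose_le_pow _ _
      _ ≤ _ := by gcongr; exact hbelow i hi
  have hex : ∀ i, ∃ Ri : Finset (Finset (ℕ × ℕ) × ℕ), i < (S + 1) * L →
      #Ri * 2 ^ (2 ^ (i / L) / 4) ≤
        #(powersetCard (r - 1) (hostBelow n (i + 1))) * n (i + 1) ∧
      LinkGood (powersetCard (r - 1) (hostBelow n (i + 1))) (n (i + 1))
        (partDeg r S Δ (i + 1)) Ri := by
    intro i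
    by_cases hi : i < (S + 1) * L
    · obtain ⟨Ri, -, h1, h2⟩ := exists_linkGood (powersetCard (r - 1) (hostBelow n (i + 1)))
        (n (i + 1)) (2 ^ (2 ^ (i / L) / 4)) (partDeg r S Δ (i + 1)) (by positivity)
        (by
          refine exp_condition r m S (i / L) _ hr (hlay i hi) hL hm1 hm2 ((hT i hi).trans ?_)
          refine pow_le_pow_left₀ (by positivity) ?_ _
          calc 16 * w * 2 ^ (i / L) ≤ 16 * w * 2 ^ S := by
                gcongr
                · norm_num
                · exact hlay i hi
            _ = 16 * (r * m) := by rw [hw]; field_simp)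
      exact ⟨Ri, fun _ => ⟨h1, h2⟩⟩
    · exact ⟨∅, fun h => absurd h hi⟩
  choose R' hR' using hex
  let R : ℕ → Finset (Finset (ℕ × ℕ) × ℕ) := fun i => R' (i - 1)
  obtain ⟨N, EH, h1, h2, h3⟩ := universal_of_pairs r m (hostBelow n ((S + 1) * L + 1))
    (hostEdges r n ((S + 1) * L) (r * m / Δ) R) (fun k EF hEF hm hiso =>
      host_universal r m S Δ hr hΔ EF hEF hm hiso R (fun i hi => (hR' i hi).2))
  refine ⟨N, EH, h1, ?_, h3⟩
  -- With `w = r * m / Q`, each of the three kinds of host edges numbers `O(w ^ r)`. For the edges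
  -- through the first `r * m / Δ` base positions this is because `Δ ≥ Q ^ r`.
  have hbase : ((n 0 : ℕ) : ℝ) ^ r ≤ (16 * w) ^ r := by
    have := sum_partSize r m S Δ 0 0 (by omega) (Nat.zero_le _) hΔ hD (Nat.zero_le _)
    gcongr
    simpa using this
  have hspecial : ((r * m / Δ : ℕ) : ℝ) * (#(hostBelow n ((S + 1) * L + 1)) : ℝ) ^ (r - 1) ≤
      (16 * w) ^ r := by
    have e1 : (#(hostBelow n ((S + 1) * L + 1)) : ℝ) ≤ 16 * w * 2 ^ S :=
      le_trans (by exact_mod_cast card_hostBelow_le n _)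
        (sum_partSize r m S Δ S _ (by omega) le_rfl hΔ hD le_rfl)
    have e2 : ((r * m / Δ : ℕ) : ℝ) ≤ w * 2 ^ S / (2 ^ S) ^ r := by
      refine Nat.cast_div_le.trans ?_
      have e3 : (r * m : ℝ) = w * 2 ^ S := by rw [hw]; field_simp
      push_cast
      rw [e3, hΔdef]
      push_cast
      gcongr
      exact le_mul_of_one_le_left (by positivity) (by norm_num)
    calc _ ≤ (w * 2 ^ S / (2 ^ S) ^ r) * (16 * w * 2 ^ S) ^ (r - 1) := by gcongr
      _ ≤ (16 * w * 2 ^ S / (2 ^ S) ^ r) * (16 * w * 2 ^ S) ^ (r - 1) := by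
          gcongr; linarith
      _ = (16 * w * 2 ^ S) ^ (r - 1 + 1) / (2 ^ S) ^ r := by rw [pow_succ]; ring
      _ = (16 * w) ^ r := by
          rw [Nat.sub_add_cancel (by omega), mul_pow (16 * w)]; field_simp
  have hparts : ∑ i ∈ range ((S + 1) * L), (#(R (i + 1)) : ℝ) ≤ 2 * C * (16 * w) ^ r := by
    calc ∑ i ∈ range ((S + 1) * L), (#(R (i + 1)) : ℝ)
        ≤ ∑ i ∈ range ((S + 1) * L), (16 * w * 2 ^ (i / L)) ^ (r - 1) *
            ((2 * partCap r m S Δ (i / L) : ℕ) : ℝ) / 2 ^ (2 ^ (i / L) / 4) := by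
          refine sum_le_sum fun i hi => ?_
          rw [mem_range] at hi
          rw [le_div_iff₀ (by positivity)]
          calc (#(R (i + 1)) : ℝ) * 2 ^ (2 ^ (i / L) / 4)
              ≤ #(powersetCard (r - 1) (hostBelow n (i + 1))) * (n (i + 1) : ℕ) := by
                exact_mod_cast (hR' i hi).1
            _ ≤ _ := by
                gcongr
                · exact hT i hi
                · exact le_rfl
      _ = ∑ u ∈ range (S + 1), (L : ℝ) * ((16 * w * 2 ^ u) ^ (r - 1) *
            ((2 * partCap r m S Δ u : ℕ) : ℝ) / 2 ^ (2 ^ u / 4)) :=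
          sum_range_mul_div L hLpos (fun u => (16 * w * 2 ^ u) ^ (r - 1) *
            ((2 * partCap r m S Δ u : ℕ) : ℝ) / 2 ^ (2 ^ u / 4)) (S + 1)
      -- One factor `2 ^ u` of `(2 ^ u) ^ (r + 1) ≤ C * 2 ^ (2 ^ u / 4)` is saved for convergence.
      _ ≤ ∑ u ∈ range (S + 1), (16 * w) ^ r * C * (1 / 2) ^ u := by
          refine sum_le_sum fun u hu => ?_
          rw [mem_range] at hu
          have e1 := partCap_upper r m S Δ u (by omega) (by omega) hD
          rw [← hDdef, ← hLdef, ← hw] at e1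
          have e2 : (L : ℝ) * (2 * partCap r m S Δ u : ℕ) ≤ 16 * w * 2 ^ u := by
            refine e1.trans ?_
            gcongr
            norm_num
          have e3 := hC (2 ^ u)
          push_cast at e3
          calc (L : ℝ) * ((16 * w * 2 ^ u) ^ (r - 1) *
                ((2 * partCap r m S Δ u : ℕ) : ℝ) / 2 ^ (2 ^ u / 4))
              = (16 * w * 2 ^ u) ^ (r - 1) *
                ((L : ℝ) * ((2 * partCap r m S Δ u : ℕ) : ℝ)) / 2 ^ (2 ^ u / 4) := by ring
            _ ≤ (16 * w * 2 ^ u) ^ (r - 1) * (16 * w * 2 ^ u) / 2 ^ (2 ^ u / 4) := by gcongr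
            _ = (16 * w) ^ r * (2 ^ u) ^ (r + 1) / 2 ^ (2 ^ u / 4) / 2 ^ u := by
                rw [← pow_succ, Nat.sub_add_cancel (by omega), mul_pow, pow_succ (2 ^ u : ℝ) r]
                field_simp
            _ ≤ (16 * w) ^ r * (C * 2 ^ (2 ^ u / 4)) / 2 ^ (2 ^ u / 4) / 2 ^ u := by gcongr
            _ = (16 * w) ^ r * C * (1 / 2) ^ u := by rw [div_pow, one_pow]; field_simp
      _ = (16 * w) ^ r * C * ∑ u ∈ range (S + 1), (1 / 2 : ℝ) ^ u := by rw [mul_sum]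
      _ ≤ (16 * w) ^ r * C * 2 := by gcongr; exact sum_geometric_two_le _
      _ = _ := by ring
  calc (#EH : ℝ) ≤ #(hostEdges r n ((S + 1) * L) (r * m / Δ) R) := by exact_mod_cast h2
    _ ≤ ((n 0 : ℕ) : ℝ) ^ r + ((r * m / Δ : ℕ) : ℝ) *
        (#(hostBelow n ((S + 1) * L + 1)) : ℝ) ^ (r - 1) +
        ∑ i ∈ range ((S + 1) * L), (#(R (i + 1)) : ℝ) := by
      exact_mod_cast card_hostEdges_le r n ((S + 1) * L) (r * m / Δ) R
    _ ≤ (16 * w) ^ r + (16 * w) ^ r + 2 * C * (16 * w) ^ r := by gcongr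
    _ = _ := by ring

/-- for every `r ≥ 3` there are `𝓔^(r)(m)`-universal `r`-uniform
hypergraphs with at most `C·m^r/(ln m)^r` edges. -/
theorem edge_universal_exists (r : ℕ) (hr : 3 ≤ r) :
    ∃ C : ℝ, 0 < C ∧ ∀ m : ℕ, 2 ≤ m →
      ∃ (N : ℕ) (EH : Finset (Finset (Fin N))),
        (∀ e ∈ EH, e.card = r) ∧
        (EH.card : ℝ) ≤ C * (m : ℝ) ^ r / Real.log m ^ r ∧
        EdgeUniversal r m N EH := by
  obtain ⟨C1, hC1pos, hC1⟩ := exists_pow_bound r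
  obtain ⟨S0, hS0⟩ := exists_large r
  set m0 := 2 ^ 2 ^ S0 with hm0
  refine ⟨2 ^ (r * m0) + (2 + 2 * C1) * (32 * r) ^ r, by positivity, fun m hm => ?_⟩
  have hmR : (2 : ℝ) ≤ m := by exact_mod_cast hm
  have hlogpos : 0 < Real.log m := Real.log_pos (by linarith)
  by_cases hlarge : m0 ≤ m
  · set q := Nat.log 2 m with hq
    set S := Nat.log 2 q with hS
    have hq1 : 2 ^ S0 ≤ q := Nat.le_log_of_pow_le (by norm_num) hlarge
    have hq0 : q ≠ 0 := by have : 1 ≤ 2 ^ S0 := Nat.one_le_two_pow; omega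
    have hSS : S0 ≤ S := Nat.le_log_of_pow_le (by norm_num) hq1
    have hQq : 2 ^ S ≤ q := Nat.pow_log_le_self 2 hq0
    have hqQ : q < 2 ^ (S + 1) := Nat.lt_pow_succ_log_self (by norm_num) q
    have hm1 : 2 ^ 2 ^ S ≤ m :=
      (Nat.pow_le_pow_right (by norm_num) hQq).trans (Nat.pow_log_le_self 2 (by omega))
    have hm2 : m ≤ 2 ^ (2 * 2 ^ S) := by
      refine (Nat.lt_pow_succ_log_self (by norm_num) m).le.trans
        (Nat.pow_le_pow_right (by norm_num) ?_)
      rw [← pow_succ']; omega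
    obtain ⟨N, EH, h1, h2, h3⟩ := universal_large r (by omega) C1 hC1 m S (hS0 S hSS) hm1 hm2
    refine ⟨N, EH, h1, h2.trans ?_, h3⟩
    -- Since `m ≤ 2 ^ (2 * Q)` with `Q = 2 ^ S`, the bound in terms of `Q` is one
    -- in terms of `log m`.
    have hlog : Real.log m ≤ 2 * 2 ^ S := by
      calc Real.log m ≤ Real.log ((2 : ℝ) ^ (2 * 2 ^ S)) := by
            apply Real.log_le_log (by linarith)
            exact_mod_cast hm2
        _ = (2 * 2 ^ S : ℕ) * Real.log 2 := by rw [Real.log_pow]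
        _ ≤ (2 * 2 ^ S : ℕ) * 1 := by
            gcongr; have := Real.log_two_lt_d9; linarith
        _ = 2 * 2 ^ S := by push_cast; ring
    rw [mul_div_assoc _ ((m : ℝ) ^ r) (Real.log m ^ r), ← div_pow]
    calc (2 + 2 * C1) * (16 * (r * m / 2 ^ S)) ^ r
        = (2 + 2 * C1) * (32 * r * (m / (2 * 2 ^ S))) ^ r := by congr 2; field_simp; norm_num
      _ ≤ (2 + 2 * C1) * (32 * r * (m / Real.log m)) ^ r := by gcongr
      _ = (2 + 2 * C1) * (32 * r) ^ r * (m / Real.log m) ^ r := by rw [mul_pow]; ring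
      _ ≤ _ := by
          gcongr
          exact le_add_of_nonneg_left (by positivity)
  · push Not at hlarge
    refine ⟨r * m, Finset.powersetCard r Finset.univ,
      fun e he => (Finset.mem_powersetCard.mp he).2, ?_, universal_complete r m⟩
    have hc : ((Finset.powersetCard r (Finset.univ : Finset (Fin (r * m)))).card : ℝ) ≤
        2 ^ (r * m0) := by
      rw [Finset.card_powersetCard, Finset.card_univ, Fintype.card_fin]
      have h1 : (r * m).choose r ≤ 2 ^ (r * m0) :=
        (Nat.choose_le_two_pow _ _).trans
          (Nat.pow_le_pow_right (by norm_num) (Nat.mul_le_mul_left _ hlarge.le))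
      exact_mod_cast h1
    rw [mul_div_assoc _ ((m : ℝ) ^ r) (Real.log m ^ r), ← div_pow]
    have hone : (1 : ℝ) ≤ (m / Real.log m) ^ r := by
      apply one_le_pow₀
      rw [le_div_iff₀ hlogpos, one_mul]
      have := Real.log_le_sub_one_of_pos (by linarith : (0 : ℝ) < m)
      linarith
    calc _ ≤ (2 : ℝ) ^ (r * m0) := hc
      _ ≤ (2 ^ (r * m0) + (2 + 2 * C1) * (32 * r) ^ r) * 1 := by
          rw [mul_one]; exact le_add_of_nonneg_right (by positivity)
      _ ≤ _ := by gcongr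
end

section
/- Let r > s ≥ 2 be integers and let F be an s-uniform hypergraph on at most r vertices. Let 𝓕 be a family of r-uniform hypergraphs and let 𝓖 be a family of s-uniform hypergraphs that hits 𝓕 on F. If G′ is an s-uniform hypergraph that is universal for 𝓖, then the r-uniform hypergraph 𝓗_{(F,r)}(G′) is universal for 𝓕. -/
/-! The embedding of a hitting hypergraph `G ∈ 𝓖` into `G'` is itself the required embedding
of `H`: it preserves the size of each edge `f` of `H`, and composed with a copy of `F` in `G[f]`
it gives a copy of `F` in `G'` induced on the image of `f`. -/

/-- The hypergraph with edge set `EF` (on vertex type `α`) has a copy in the hypergraph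
with edge set `EH` (on vertex type `β`): there is an injective map sending edges to
edges. -/
def ContainsCopy {α β : Type*} [DecidableEq α] [DecidableEq β]
    (EF : Finset (Finset α)) (EH : Finset (Finset β)) : Prop :=
  ∃ φ : α → β, Function.Injective φ ∧ ∀ e ∈ EF, e.image φ ∈ EH

/-- The hypergraph `EG` hits the hypergraph `EH` (both on the same vertex type `β`)
on the hypergraph `F` given by vertex set `VF ⊆ ℕ` and edge set `EF`:
for every edge `f` of `EH` the subhypergraph of `EG` induced on `f` contains a copy
of `F`. -/
def HitsOn {β : Type*} [DecidableEq β] (EG EH : Finset (Finset β))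
    (VF : Finset ℕ) (EF : Finset (Finset ℕ)) : Prop :=
  ∀ f ∈ EH, ∃ φ : ℕ → β, Set.InjOn φ VF ∧ (∀ v ∈ VF, φ v ∈ f) ∧
    ∀ e ∈ EF, e.image φ ∈ EG

open Classical in
/-- `𝓗_{(F,r)}(G)`: the `r`-uniform hypergraph on the vertex set of `G` whose edges are
exactly the `r`-element vertex sets `f` such that the subhypergraph of `G` induced on `f`
contains a copy of `F` (given by vertex set `VF ⊆ ℕ` and edge set `EF`). -/
noncomputable def HFr {β : Type*} [Fintype β] [DecidableEq β] (r : ℕ)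
    (VF : Finset ℕ) (EF : Finset (Finset ℕ)) (EG : Finset (Finset β)) :
    Finset (Finset β) :=
  (Finset.univ.powersetCard r).filter fun f =>
    ∃ φ : ℕ → β, Set.InjOn φ VF ∧ (∀ v ∈ VF, φ v ∈ f) ∧ ∀ e ∈ EF, e.image φ ∈ EG

/-- if the family `𝓖` of `s`-uniform hypergraphs hits the family `𝓕` of
`r`-uniform hypergraphs on `F` (an `s`-uniform hypergraph on at most `r` vertices), and
`G'` is `𝓖`-universal, then `𝓗_{(F,r)}(G')` is `𝓕`-universal. Hypergraphs in the
families are represented as pairs `⟨k, edge set on Fin k⟩`. -/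
theorem HFr_universal {β : Type} [Fintype β] [DecidableEq β] (r s : ℕ)
    (hs : 2 ≤ s) (hsr : s < r)
    (VF : Finset ℕ) (EF : Finset (Finset ℕ))
    (hVF : VF.card ≤ r) (hEF : ∀ e ∈ EF, e.card = s ∧ e ⊆ VF)
    (𝓕 𝓖 : Set ((k : ℕ) × Finset (Finset (Fin k))))
    (h𝓕unif : ∀ H ∈ 𝓕, ∀ e ∈ H.2, e.card = r)
    (h𝓖unif : ∀ G ∈ 𝓖, ∀ e ∈ G.2, e.card = s)
    (hHits : ∀ H ∈ 𝓕, ∃ EG : Finset (Finset (Fin H.1)),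
      (⟨H.1, EG⟩ : (k : ℕ) × Finset (Finset (Fin k))) ∈ 𝓖 ∧ HitsOn EG H.2 VF EF)
    (EG' : Finset (Finset β)) (hG'unif : ∀ e ∈ EG', e.card = s)
    (hUniv : ∀ G ∈ 𝓖, ContainsCopy G.2 EG') :
    ∀ H ∈ 𝓕, ContainsCopy H.2 (HFr r VF EF EG') := by
  intro H hH
  obtain ⟨EG, hEG, hits⟩ := hHits H hH
  obtain ⟨ψ, hψ, hψE⟩ := hUniv _ hEG
  refine ⟨ψ, hψ, fun f hf => ?_⟩
  obtain ⟨φ, hφ, hφf, hφE⟩ := hits f hf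
  simp only [HFr, Finset.mem_filter, Finset.mem_powersetCard]
  refine ⟨⟨Finset.subset_univ _, ?_⟩, ψ ∘ φ, hψ.comp_injOn hφ,
    fun v hv => Finset.mem_image_of_mem ψ (hφf v hv), fun e he => ?_⟩
  · rw [Finset.card_image_of_injective _ hψ, h𝓕unif H hH f hf]
  · rw [← Finset.image_image]
    exact hψE _ (hφE e he)
end

section
/- Let r ≥ 3 be an odd integer and Δ ≥ 1 an integer. Let F be the graph on r vertices that is the disjoint union of a perfect matching on r−3 vertices and a path P₃ with 2 edges (on 3 vertices). Then for every H ∈ 𝓕^(r)(n,Δ) there exists a graph H′ on the vertex set of H with maximum degree at most ⌈(r+1)Δ/r⌉ that hits H on F; in other words, the family 𝓕^(2)(n,⌈(r+1)Δ/r⌉) hits the family 𝓕^(r)(n,Δ) on F. -/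
/-- The edge set (on the vertex set `{0,…,r-1} ⊆ ℕ`) of the graph which is the
disjoint union of a perfect matching on the `r - 3` vertices `0,…,r-4` (edges
`{2i, 2i+1}`) and the path `P₃` with two edges on the vertices `r-3, r-2, r-1`. -/
def matchP3Edges (r : ℕ) : Finset (Finset ℕ) :=
  ((Finset.range ((r - 3) / 2)).image fun i => ({2 * i, 2 * i + 1} : Finset ℕ)) ∪
    {({r - 3, r - 2} : Finset ℕ), ({r - 2, r - 1} : Finset ℕ)}

/-- A hypergraph with edges of size `r` and degrees at most `Δ ≤ r * t` has a choice of one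
vertex in every edge that uses each vertex at most `t` times: apply Hall's theorem to `t` copies
of every vertex, the Hall condition being a double count of incidences. -/
lemma exists_centers {r Δ n t : ℕ} (hr : 0 < r) (ht : Δ ≤ r * t)
    (EH : Finset (Finset (Fin n))) (hHunif : ∀ e ∈ EH, e.card = r)
    (hHdeg : ∀ v : Fin n, (EH.filter (fun e => v ∈ e)).card ≤ Δ) :
    ∃ c : EH → Fin n, (∀ e : EH, c e ∈ e.1) ∧
      ∀ v, (Finset.univ.filter (fun e => c e = v)).card ≤ t := by
  classical
  have hall := (Finset.all_card_le_biUnion_card_iff_exists_injective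
    (fun e : EH => e.1 ×ˢ Finset.range t)).1 (by
    intro S
    have hU : (S.biUnion fun e : EH => e.1 ×ˢ Finset.range t)
        = (S.biUnion fun e : EH => e.1) ×ˢ Finset.range t := by
      ext ⟨a, b⟩
      simp only [Finset.mem_biUnion, Finset.mem_product]
      tauto
    rw [hU, Finset.card_product, Finset.card_range]
    set U := S.biUnion fun e : EH => e.1 with hUdef
    have h1 : ∑ e ∈ S, ∑ v ∈ U, (if v ∈ e.1 then 1 else 0) = S.card * r := by
      rw [Finset.sum_const_nat]
      intro e he
      rw [← Finset.card_filter, Finset.filter_mem_eq_inter,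
        Finset.inter_eq_right.2 (Finset.subset_biUnion_of_mem (fun e : EH => e.1) he)]
      exact hHunif _ e.2
    have h2 : ∑ v ∈ U, ∑ e ∈ S, (if v ∈ e.1 then 1 else 0) ≤ U.card * Δ := by
      rw [← smul_eq_mul]
      refine Finset.sum_le_card_nsmul _ _ _ fun v _ => ?_
      rw [← Finset.card_filter]
      refine le_trans ?_ (hHdeg v)
      refine Finset.card_le_card_of_injOn (fun e => e.1) ?_ Subtype.val_injective.injOn
      intro e he
      simp at he ⊢
      exact he.2
    rw [Finset.sum_comm, h1] at h2
    refine Nat.le_of_mul_le_mul_right (h2.trans ?_) hr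
    calc U.card * Δ ≤ U.card * (r * t) := by gcongr
      _ = U.card * t * r := by ring)
  obtain ⟨f, hf, hm⟩ := hall
  refine ⟨fun e => (f e).1, fun e => (Finset.mem_product.1 (hm e)).1, fun v => ?_⟩
  rw [← Finset.card_range t]
  refine Finset.card_le_card_of_injOn (fun e => (f e).2)
    (fun e _ => (Finset.mem_product.1 (hm e)).2) ?_
  intro a ha b hb hab
  simp at ha hb
  exact hf (Prod.ext (ha.trans hb.symm) hab)

lemma exists_enumeration {r n : ℕ} (hr : 3 ≤ r) (e : Finset (Fin n)) (he : e.card = r)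
    (c : Fin n) (hc : c ∈ e) :
    ∃ φ : ℕ → Fin n, Set.InjOn φ (Finset.range r) ∧ (∀ v ∈ Finset.range r, φ v ∈ e) ∧
      φ (r - 2) = c := by
  let g := (e.equivFinOfCardEq he).symm
  let g' : Fin r ≃ e := (Equiv.swap ⟨r - 2, by omega⟩ (g.symm ⟨c, hc⟩)).trans g
  refine ⟨fun i => if h : i < r then g' ⟨i, h⟩ else c, ?_, ?_, ?_⟩
  · intro a ha b hb hab
    simp only [Finset.coe_range, Set.mem_Iio] at ha hb
    simp only [ha, hb, dite_true] at hab
    simpa using g'.injective (Subtype.ext hab)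
  · intro v hv
    simp only [Finset.mem_range.1 hv, dite_true]
    exact (g' _).2
  · simp [g', show r - 2 < r by omega]

/-- The edge `{r - 3, r - 2}` of the path continues the pattern `{2j, 2j + 1}` of the matching; only
the last edge is exceptional. -/
lemma mem_matchP3Edges {r k : ℕ} (hk : r = 2 * k + 3) {a : Finset ℕ} :
    a ∈ matchP3Edges r ↔
      (∃ j ≤ k, a = {2 * j, 2 * j + 1}) ∨ a = {2 * k + 1, 2 * k + 2} := by
  subst hk
  have h0 : 2 * k / 2 = k := by omega
  have h1 : 2 * k + 3 - 3 = 2 * k := by omega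
  have h2 : 2 * k + 3 - 2 = 2 * k + 1 := by omega
  have h3 : 2 * k + 3 - 1 = 2 * k + 2 := by omega
  simp only [matchP3Edges, h1, h0, h2, h3, Finset.mem_union, Finset.mem_image, Finset.mem_range,
    Finset.mem_insert, Finset.mem_singleton]
  constructor
  · rintro (⟨j, hj, rfl⟩ | rfl | rfl)
    · exact Or.inl ⟨j, hj.le, rfl⟩
    · exact Or.inl ⟨k, le_rfl, rfl⟩
    · exact Or.inr rfl
  · rintro (⟨j, hj, rfl⟩ | rfl)
    · rcases hj.lt_or_eq with h | rfl
      · exact Or.inl ⟨j, h, rfl⟩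
      · exact Or.inr (Or.inl rfl)
    · exact Or.inr (Or.inr rfl)

lemma degree_matchP3Edges {r k : ℕ} (hk : r = 2 * k + 3) (i : ℕ) :
    ((matchP3Edges r).filter (fun a => i ∈ a)).card ≤ 1 + if i = r - 2 then 1 else 0 := by
  split_ifs with hi
  · refine le_trans (Finset.card_le_card (t := {{2 * k, 2 * k + 1}, {2 * k + 1, 2 * k + 2}}) ?_)
      Finset.card_le_two
    intro a ha
    rw [Finset.mem_filter, mem_matchP3Edges hk] at ha
    rcases ha with ⟨⟨j, hj, rfl⟩ | rfl, h⟩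
    · simp only [Finset.mem_insert, Finset.mem_singleton] at h
      obtain rfl : j = k := by omega
      simp
    · simp
  · refine Finset.card_le_one.2 fun a ha b hb => ?_
    rw [Finset.mem_filter, mem_matchP3Edges hk] at ha hb
    rcases ha with ⟨⟨j, hj, rfl⟩ | rfl, h⟩ <;> rcases hb with ⟨⟨j', hj', rfl⟩ | rfl, h'⟩ <;>
      simp only [Finset.mem_insert, Finset.mem_singleton] at h h'
    · obtain rfl : j = j' := by omega
      rfl
    · omega
    · omega
    · rfl

lemma matchP3Edges_pair {r k : ℕ} (hk : r = 2 * k + 3) {a : Finset ℕ}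
    (ha : a ∈ matchP3Edges r) : a.card = 2 ∧ a ⊆ Finset.range r := by
  rw [mem_matchP3Edges hk] at ha
  rcases ha with ⟨j, hj, rfl⟩ | rfl
  all_goals
    refine ⟨Finset.card_pair (by omega), fun x hx => ?_⟩
    simp only [Finset.mem_insert, Finset.mem_singleton] at hx
    rw [Finset.mem_range]
    omega

/-- The copy of the graph placed in one edge `e` gives degree `0` outside `e`, at most `2` at the
vertex `φ (r - 2)` and at most `1` elsewhere. -/
lemma degree_copy {r k n : ℕ} (hk : r = 2 * k + 3) {e : Finset (Fin n)} {φ : ℕ → Fin n}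
    (hinj : Set.InjOn φ (Finset.range r)) (hmem : ∀ v ∈ Finset.range r, φ v ∈ e) (v : Fin n) :
    ((((matchP3Edges r).image (Finset.image φ)).filter (fun a => v ∈ a)).card) ≤
      (if v ∈ e then 1 else 0) + if φ (r - 2) = v then 1 else 0 := by
  by_cases hv : ∃ i ∈ Finset.range r, φ i = v
  · obtain ⟨i, hi, rfl⟩ := hv
    rw [if_pos (hmem i hi)]
    have hr2 : r - 2 ∈ Finset.range r := by rw [Finset.mem_range]; omega
    have hiff : φ (r - 2) = φ i ↔ i = r - 2 :=
      ⟨fun h => (hinj hr2 hi h).symm, fun h => by rw [h]⟩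
    simp only [hiff]
    refine le_trans ?_ (degree_matchP3Edges hk i)
    refine le_trans (Finset.card_le_card ?_) (Finset.card_image_le (f := Finset.image φ))
    intro b hb
    obtain ⟨hb, hib⟩ := Finset.mem_filter.1 hb
    obtain ⟨a, ha, rfl⟩ := Finset.mem_image.1 hb
    obtain ⟨j, hj, hji⟩ := Finset.mem_image.1 hib
    obtain rfl := hinj ((matchP3Edges_pair hk ha).2 hj) hi hji
    exact Finset.mem_image_of_mem _ (Finset.mem_filter.2 ⟨ha, hj⟩)
  · rw [Finset.card_eq_zero.2]
    · exact Nat.zero_le _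
    · refine Finset.filter_eq_empty_iff.2 fun b hb hvb => ?_
      obtain ⟨a, ha, rfl⟩ := Finset.mem_image.1 hb
      obtain ⟨j, hj, hji⟩ := Finset.mem_image.1 hvb
      exact hv ⟨j, (matchP3Edges_pair hk ha).2 hj, hji⟩

/-- for odd `r ≥ 3` and `Δ ≥ 1`, with `F` the disjoint union of a perfect
matching on `r-3` vertices and a path with two edges: every `r`-uniform hypergraph `H`
with maximum degree at most `Δ` (on a vertex set `Fin n`) admits a graph `H'` on the
same vertex set with maximum degree at most `⌈(r+1)Δ/r⌉` that hits `H` on `F`. -/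
theorem matching_path_hits (r Δ n : ℕ) (hr : 3 ≤ r) (hro : Odd r) (hΔ : 1 ≤ Δ)
    (EH : Finset (Finset (Fin n))) (hHunif : ∀ e ∈ EH, e.card = r)
    (hHdeg : ∀ v : Fin n, (EH.filter (fun e => v ∈ e)).card ≤ Δ) :
    ∃ EH' : Finset (Finset (Fin n)),
      (∀ e ∈ EH', e.card = 2) ∧
      (∀ v : Fin n, (EH'.filter (fun e => v ∈ e)).card ≤ ⌈((r + 1 : ℚ) * Δ) / r⌉₊) ∧
      HitsOn EH' EH (Finset.range r) (matchP3Edges r) := by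
  classical
  obtain ⟨k, hk⟩ : ∃ k, r = 2 * k + 3 := by
    obtain ⟨m, hm⟩ := hro
    exact ⟨m - 1, by omega⟩
  have hr0 : (0 : ℚ) < r := by exact_mod_cast (by omega : 0 < r)
  have ht : Δ ≤ r * ⌈(Δ : ℚ) / r⌉₊ := by
    have h := Nat.le_ceil ((Δ : ℚ) / r)
    rw [div_le_iff₀ hr0, mul_comm] at h
    exact_mod_cast h
  have hceil : ⌈((r + 1 : ℚ) * Δ) / r⌉₊ = Δ + ⌈(Δ : ℚ) / r⌉₊ := by
    rw [show ((r + 1 : ℚ) * Δ) / r = (Δ : ℚ) / r + (Δ : ℕ) by field_simp; ring,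
      Nat.ceil_add_natCast (by positivity), add_comm]
  obtain ⟨c, hc, hct⟩ := exists_centers (by omega) ht EH hHunif hHdeg
  choose φ hinj hmem hφc using
    fun e : EH => exists_enumeration hr e.1 (hHunif _ e.2) (c e) (hc e)
  refine ⟨Finset.univ.biUnion fun e : EH => (matchP3Edges r).image (Finset.image (φ e)),
    ?_, fun v => ?_, ?_⟩
  · intro b hb
    obtain ⟨e, -, hb⟩ := Finset.mem_biUnion.1 hb
    obtain ⟨a, ha, rfl⟩ := Finset.mem_image.1 hb
    obtain ⟨hcard, hsub⟩ := matchP3Edges_pair hk ha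
    rw [Finset.card_image_of_injOn ((hinj e).mono (by exact_mod_cast hsub)), hcard]
  · rw [hceil, Finset.filter_biUnion]
    refine Finset.card_biUnion_le.trans ?_
    refine (Finset.sum_le_sum fun e _ => degree_copy hk (hinj e) (hmem e) v).trans ?_
    rw [Finset.sum_add_distrib]
    refine add_le_add ?_ ?_
    · rw [Finset.sum_coe_sort EH (fun e => if v ∈ e then 1 else 0), ← Finset.card_filter]
      exact hHdeg v
    · simp only [hφc]
      rw [← Finset.card_filter]
      exact hct v
  · intro f hf
    refine ⟨φ ⟨f, hf⟩, hinj _, hmem ⟨f, hf⟩, fun a ha => ?_⟩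
    exact Finset.mem_biUnion.2 ⟨⟨f, hf⟩, Finset.mem_univ _, Finset.mem_image_of_mem _ ha⟩
end

section
/- Let r ≥ 3 be an odd integer, let F be the graph on r vertices that is the disjoint union of a perfect matching on r−3 vertices and a path P₃ with 2 edges, and let G be any finite graph with maximum degree Δ(G). Then the number of edges of the r-uniform hypergraph 𝓗_{(F,r)}(G) is at most 2·|E(G)|^{(r−1)/2}·Δ(G). -/
/-- for odd `r ≥ 3`, `F` the disjoint union of a perfect matching on
`r-3` vertices and a path with two edges, and `G` any finite graph (a 2-uniform
hypergraph), the number of edges of `𝓗_{(F,r)}(G)` is at most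
`2·|E(G)|^{(r-1)/2}·Δ(G)`, where `Δ(G)` is the maximum vertex degree of `G`. -/
theorem HFr_card_le_matchP3 {β : Type} [Fintype β] [DecidableEq β] (r : ℕ)
    (hr : 3 ≤ r) (hro : Odd r)
    (EG : Finset (Finset β)) (hGunif : ∀ e ∈ EG, e.card = 2) :
    (HFr r (Finset.range r) (matchP3Edges r) EG).card ≤
      2 * EG.card ^ ((r - 1) / 2) *
        Finset.univ.sup (fun v : β => (EG.filter (fun e => v ∈ e)).card) := by
  obtain ⟨m, rfl⟩ : ∃ m, r = 2 * m + 3 := by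
    obtain ⟨k, rfl⟩ := hro
    exact ⟨k - 1, by omega⟩
  have hk : (2 * m + 3 - 1) / 2 = m + 1 := by omega
  rw [hk]
  set D := Finset.univ.sup (fun v : β => (EG.filter (fun e => v ∈ e)).card) with hD
  -- `t` lists the disjoint edges, `v` is the middle vertex of the path, `e` the path's last edge.
  have hsub : HFr (2 * m + 3) (Finset.range (2 * m + 3)) (matchP3Edges (2 * m + 3)) EG ⊆
      (Fintype.piFinset fun _ : Fin (m + 1) => EG).biUnion fun t =>
        (t (Fin.last m)).biUnion fun v =>
          (EG.filter fun e => v ∈ e).image fun e => (Finset.univ.biUnion t) ∪ e := by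
    intro f hf
    simp only [HFr, Finset.mem_filter, Finset.mem_powersetCard] at hf
    obtain ⟨⟨-, hcard⟩, φ, hinj, hmem, hE⟩ := hf
    have hfim : (Finset.range (2 * m + 3)).image φ = f := by
      apply Finset.eq_of_subset_of_card_le
      · exact Finset.image_subset_iff.2 hmem
      · rw [Finset.card_image_of_injOn hinj, hcard, Finset.card_range]
    have hpair : ∀ i : Fin (m + 1),
        ({2 * (i : ℕ), 2 * (i : ℕ) + 1} : Finset ℕ).image φ ∈ EG := by
      intro i
      apply hE
      rcases Nat.lt_succ_iff_lt_or_eq.1 i.2 with h | h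
      · exact Finset.mem_union_left _
          (Finset.mem_image.2 ⟨i, Finset.mem_range.2 (by omega), rfl⟩)
      · -- the first edge of the path is the pair with index `m`
        apply Finset.mem_union_right
        have h1 : 2 * m + 3 - 3 = 2 * m := by omega
        have h2 : 2 * m + 3 - 2 = 2 * m + 1 := by omega
        simp [h, h1, h2]
    have hlast : ({2 * m + 1, 2 * m + 2} : Finset ℕ).image φ ∈ EG := by
      apply hE
      apply Finset.mem_union_right
      have h2 : 2 * m + 3 - 2 = 2 * m + 1 := by omega
      have h1 : 2 * m + 3 - 1 = 2 * m + 2 := by omega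
      simp [h1, h2]
    simp only [Finset.mem_biUnion, Finset.mem_image, Finset.mem_filter, Fintype.mem_piFinset]
    refine ⟨fun i => ({2 * (i : ℕ), 2 * (i : ℕ) + 1} : Finset ℕ).image φ, hpair,
      φ (2 * m + 1), by simp, ({2 * m + 1, 2 * m + 2} : Finset ℕ).image φ,
      ⟨hlast, by simp⟩, ?_⟩
    rw [← hfim, ← Finset.biUnion_image, ← Finset.image_union]
    congr 1
    ext n
    simp only [Finset.mem_union, Finset.mem_biUnion, Finset.mem_univ, true_and,
      Finset.mem_insert, Finset.mem_singleton, Finset.mem_range]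
    constructor
    · rintro (⟨i, hi⟩ | h)
      · have := i.2
        omega
      · omega
    · intro h
      by_cases h' : n = 2 * m + 2
      · exact Or.inr (Or.inr h')
      · exact Or.inl ⟨⟨n / 2, by omega⟩, by dsimp only; omega⟩
  calc _ ≤ _ := Finset.card_le_card hsub
    _ ≤ (Fintype.piFinset fun _ : Fin (m + 1) => EG).card * (2 * D) := by
      apply Finset.card_biUnion_le_card_mul
      intro t ht
      rw [← hGunif _ (Fintype.mem_piFinset.1 ht (Fin.last m))]
      apply Finset.card_biUnion_le_card_mul
      intro v _
      exact Finset.card_image_le.trans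
        (Finset.le_sup (f := fun v : β => (EG.filter (fun e => v ∈ e)).card)
          (Finset.mem_univ v))
    _ = 2 * EG.card ^ (m + 1) * D := by
      rw [Fintype.card_piFinset]
      simp only [Finset.prod_const, Finset.card_univ, Fintype.card_fin]
      ring
end

section
/- Let r ≥ 2, Δ ≥ 1, n ≥ 1 and D ≥ 1 be integers. Let H be an r-uniform hypergraph that is universal for 𝓕^(r)(n,Δ), let Q be a finite set, and let C be a bipartite graph with parts V(H) and Q such that every vertex of V(H) has at most D neighbours in C and such that for every S ⊆ V(H) with |S| ≤ n the neighbourhood of S in C has size at least |S|. Define the r-uniform hypergraph H′ on vertex set Q whose edges are the r-element sets f′ ⊆ Q for which there exists an edge f ∈ E(H) and a perfect matching in C between f and f′. Then H′ is universal for 𝓕^(r)(n,Δ) and has at most D^r·|E(H)| edges. -/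
/-!
Universality: given `F` in the family, embed it into `H` by `φ`. The image of `φ` has at most `n`
vertices, so the expansion hypothesis is exactly Hall's condition for the neighbourhoods
of the vertices `φ i`, and Hall's theorem gives an injective `ψ` with every `(φ i, ψ i)` in `C`.
For an edge `e` of `F`, the map `φ i ↦ ψ i` is a perfect matching from the edge `φ(e)` of `H`
to `ψ(e)`, so `ψ` embeds `F` into `H'`.

Edge count: every edge of `H'` is the image of a choice function picking a neighbour of each
vertex of some edge `f` of `H`; each `f` has at most `D ^ r` such choice functions.
-/

/-- The neighbourhood of the vertex `v` of the left part in the bipartite graph `C`. -/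
def nbr {α Q : Type} [DecidableEq α] [DecidableEq Q] (C : Finset (α × Q)) (v : α) : Finset Q :=
  (C.filter (fun p => p.1 = v)).image Prod.snd

theorem mem_nbr {α Q : Type} [DecidableEq α] [DecidableEq Q] (C : Finset (α × Q)) (v : α)
    (q : Q) : q ∈ nbr C v ↔ (v, q) ∈ C := by
  simp [nbr]

/-- Hall's theorem applied to the neighbourhoods of an injectively embedded family of `n`
vertices. -/
theorem exists_matching {α Q : Type} [DecidableEq α] [DecidableEq Q] {n : ℕ}
    (C : Finset (α × Q))
    (hHall : ∀ S : Finset α, S.card ≤ n →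
      S.card ≤ ((C.filter (fun p => p.1 ∈ S)).image Prod.snd).card)
    (φ : Fin n → α) (hφ : Function.Injective φ) :
    ∃ ψ : Fin n → Q, Function.Injective ψ ∧ ∀ i, (φ i, ψ i) ∈ C := by
  obtain ⟨ψ, hψ, h⟩ := (Finset.all_card_le_biUnion_card_iff_exists_injective
    (fun i => nbr C (φ i))).1 (by
      intro s
      have hcard : (s.image φ).card = s.card := Finset.card_image_of_injective _ hφ
      have hs : s.card ≤ n := by simpa using s.card_le_univ
      have h := hHall (s.image φ) (hcard.trans_le hs)
      rw [hcard] at h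
      refine h.trans (Finset.card_le_card ?_)
      intro q hq
      simp only [Finset.mem_image, Finset.mem_filter, Prod.exists, exists_eq_right,
        Finset.mem_biUnion, mem_nbr] at hq ⊢
      obtain ⟨_, hC, i, hi, rfl⟩ := hq
      exact ⟨i, hi, hC⟩)
  exact ⟨ψ, hψ, fun i => (mem_nbr C _ _).1 (h i)⟩


/-- `EH` (a set of edges on a vertex type `β`) is the edge set of an `r`-uniform
hypergraph that is universal for the family `𝓕^(r)(n,Δ)` of `r`-uniform hypergraphs
with at most `n` vertices and maximum vertex degree at most `Δ`. -/
def HypUniversal (r n Δ : ℕ) {β : Type*} [DecidableEq β] (EH : Finset (Finset β)) :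
    Prop :=
  ∀ EF : Finset (Finset (Fin n)),
    (∀ e ∈ EF, e.card = r) →
    (∀ v : Fin n, (EF.filter (fun e => v ∈ e)).card ≤ Δ) →
    ∃ φ : Fin n → β, Function.Injective φ ∧ ∀ e ∈ EF, e.image φ ∈ EH

/-- transferring universality through a concentrator. `C` is a bipartite
graph (a finite set of pairs) between `V(H) = α` and `Q`; every vertex of `α` has at
most `D` neighbours, and every `S ⊆ α` with `|S| ≤ n` satisfies `|N(S)| ≥ |S|`. The
hypergraph `H'` on `Q`, whose edges are the `r`-sets `f'` admitting a perfect matching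
in `C` from some edge `f` of `H` to `f'` (encoded by a map `μ` injective on `f` with
image `f'` whose graph lies in `C`), is again `𝓕^(r)(n,Δ)`-universal and has at most
`D^r·|E(H)|` edges. -/
theorem concentrator_transfer {α Q : Type} [Fintype α] [DecidableEq α]
    [Fintype Q] [DecidableEq Q]
    (r Δ n D : ℕ) (hr : 2 ≤ r) (hΔ : 1 ≤ Δ) (hn : 1 ≤ n) (hD : 1 ≤ D)
    (EH : Finset (Finset α)) (hunif : ∀ e ∈ EH, e.card = r)
    (huniv : HypUniversal r n Δ EH)
    (C : Finset (α × Q))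
    (hdeg : ∀ v : α, (C.filter (fun p => p.1 = v)).card ≤ D)
    (hHall : ∀ S : Finset α, S.card ≤ n →
      S.card ≤ ((C.filter (fun p => p.1 ∈ S)).image Prod.snd).card)
    (EH' : Finset (Finset Q))
    (hEH' : ∀ f' : Finset Q, f' ∈ EH' ↔ (f'.card = r ∧ ∃ f ∈ EH, ∃ μ : α → Q,
      Set.InjOn μ f ∧ f.image μ = f' ∧ ∀ v ∈ f, (v, μ v) ∈ C)) :
    HypUniversal r n Δ EH' ∧ EH'.card ≤ D ^ r * EH.card := by
  constructor
  · intro EF hF hFdeg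
    obtain ⟨φ, hφ, hφE⟩ := huniv EF hF hFdeg
    obtain ⟨ψ, hψ, hψC⟩ := exists_matching C hHall φ hφ
    refine ⟨ψ, hψ, fun e he => (hEH' _).2 ⟨?_, e.image φ, hφE e he, ?_⟩⟩
    · rw [Finset.card_image_of_injective _ hψ, hF e he]
    · -- `1 ≤ n` makes `Fin n` nonempty, so that `φ` has a left inverse.
      haveI : Nonempty (Fin n) := ⟨⟨0, hn⟩⟩
      have hinv : ∀ i, Function.invFun φ (φ i) = i := Function.leftInverse_invFun hφ
      refine ⟨fun v => ψ (Function.invFun φ v), ?_, ?_, ?_⟩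
      · intro x hx y hy hxy
        simp only [Finset.coe_image, Set.mem_image] at hx hy
        obtain ⟨i, -, rfl⟩ := hx
        obtain ⟨j, -, rfl⟩ := hy
        simp only [hinv] at hxy
        rw [hψ hxy]
      · rw [Finset.image_image]
        exact Finset.image_congr fun i _ => by simp [hinv]
      · intro v hv
        obtain ⟨i, -, rfl⟩ := Finset.mem_image.1 hv
        simpa only [hinv] using hψC i
  · have hsub : EH' ⊆ EH.biUnion (fun f => (f.pi (fun v => nbr C v)).image
        (fun g => f.attach.image (fun v => g v.1 v.2))) := by
      intro f' hf'
      obtain ⟨-, f, hf, μ, -, rfl, hμ⟩ := (hEH' f').1 hf'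
      refine Finset.mem_biUnion.2 ⟨f, hf, Finset.mem_image.2 ⟨fun v _ => μ v, ?_, ?_⟩⟩
      · exact Finset.mem_pi.2 fun v hv => (mem_nbr C _ _).2 (hμ v hv)
      · ext q
        simp
    calc EH'.card ≤ _ := Finset.card_le_card hsub
      _ ≤ EH.card * D ^ r := by
        refine Finset.card_biUnion_le_card_mul _ _ _ fun f hf => ?_
        refine Finset.card_image_le.trans ?_
        rw [Finset.card_pi, ← hunif f hf]
        exact Finset.prod_le_pow_card _ _ _ fun v _ => Finset.card_image_le.trans (hdeg v)
      _ = D ^ r * EH.card := Nat.mul_comm _ _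
end

section
/- Let r ≥ 3 and m ≥ 1 be integers. If G is a graph that is universal for the family 𝓔^(2)(C(r,2)·m) (where C(r,2) is the binomial coefficient r choose 2), then the r-uniform hypergraph 𝒦_r(G) on the vertex set V(G), whose edges are exactly the r-element subsets of V(G) that induce a complete graph K_r in G, is universal for 𝓔^(r)(m). -/
/-!
The shadow graph of an `r`-uniform hypergraph joins two distinct vertices when some edge contains
both. Each edge contributes at most `r.choose 2` pairs, so at most `m` edges give a shadow with at
most `r.choose 2 * m` edges; and since `r ≥ 2`, a vertex lying in an edge is not isolated in the
shadow. Hence `G` contains a copy of the shadow. An embedding of the shadow into `G` maps every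
hyperedge to an `r`-clique of `G`, that is, to an edge of `𝒦_r(G)`.
-/

open Classical in
/-- `𝒦_r(G)`: the `r`-uniform hypergraph on the vertex set of the graph `G` whose
edges are exactly the `r`-element vertex sets inducing a complete graph in `G`. -/
noncomputable def cliqueHypergraph {β : Type*} [Fintype β] (r : ℕ)
    (G : SimpleGraph β) : Finset (Finset β) :=
  (Finset.univ.powersetCard r).filter fun f =>
    ∀ x ∈ f, ∀ y ∈ f, x ≠ y → G.Adj x y

/-- The shadow graph of a family of finite sets: distinct vertices are adjacent when some member
of the family contains both. -/
def shadowGraph {α : Type*} (E : Finset (Finset α)) : SimpleGraph α where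
  Adj x y := x ≠ y ∧ ∃ e ∈ E, x ∈ e ∧ y ∈ e
  symm := ⟨fun _ _ ⟨hne, e, he, hx, hy⟩ => ⟨hne.symm, e, he, hy, hx⟩⟩
  loopless := ⟨fun _ h => h.1 rfl⟩

/-- The edges of the shadow are covered by the pairs inside the individual hyperedges, and an
`r`-set contains `r.choose 2` of them. -/
lemma ncard_edgeSet_shadowGraph_le {α : Type*} [DecidableEq α] {r : ℕ} (E : Finset (Finset α))
    (hE : ∀ e ∈ E, e.card = r) : (shadowGraph E).edgeSet.ncard ≤ r.choose 2 * E.card := by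
  have hsub : (shadowGraph E).edgeSet ⊆
      ↑(E.biUnion fun e => e.offDiag.image fun p => s(p.1, p.2)) := by
    intro s
    induction s using Sym2.ind with
    | _ x y =>
      rintro ⟨hne, e, he, hx, hy⟩
      simp only [Finset.coe_biUnion, Set.mem_iUnion]
      exact ⟨e, he, Finset.mem_coe.2 (Finset.mem_image.2
        ⟨(x, y), Finset.mem_offDiag.2 ⟨hx, hy, hne⟩, rfl⟩)⟩
  calc (shadowGraph E).edgeSet.ncard
      ≤ (E.biUnion fun e => e.offDiag.image fun p => s(p.1, p.2)).card := by
        rw [← Set.ncard_coe_finset]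
        exact Set.ncard_le_ncard hsub (Finset.finite_toSet _)
    _ ≤ E.card * r.choose 2 := by
        refine Finset.card_biUnion_le_card_mul _ _ _ fun e he => ?_
        rw [← hE e he]
        exact (Sym2.card_image_offDiag e).le
    _ = r.choose 2 * E.card := Nat.mul_comm _ _

/-- if the graph `G` is universal for the family `𝓔^(2)((r choose 2)·m)`
of graphs with at most `(r choose 2)·m` edges and no isolated vertices, then the
`r`-uniform hypergraph `𝒦_r(G)` is universal for the family `𝓔^(r)(m)` of `r`-uniform
hypergraphs with at most `m` edges and no isolated vertices. -/
theorem cliqueHypergraph_universal {β : Type} [Fintype β] [DecidableEq β]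
    (r m : ℕ) (hr : 3 ≤ r) (hm : 1 ≤ m) (G : SimpleGraph β)
    (hUniv : ∀ (k : ℕ) (F : SimpleGraph (Fin k)),
      F.edgeSet.ncard ≤ r.choose 2 * m → (∀ v : Fin k, ∃ w, F.Adj v w) →
      ∃ φ : Fin k → β, Function.Injective φ ∧
        ∀ x y : Fin k, F.Adj x y → G.Adj (φ x) (φ y)) :
    ∀ (k : ℕ) (EF : Finset (Finset (Fin k))),
      (∀ e ∈ EF, e.card = r) → EF.card ≤ m → (∀ v : Fin k, ∃ e ∈ EF, v ∈ e) →
      ∃ φ : Fin k → β, Function.Injective φ ∧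
        ∀ e ∈ EF, e.image φ ∈ cliqueHypergraph r G := by
  intro k EF hcard hm' hcov
  obtain ⟨φ, hinj, hφ⟩ := hUniv k (shadowGraph EF)
    ((ncard_edgeSet_shadowGraph_le EF hcard).trans (Nat.mul_le_mul_left _ hm')) (by
      intro v
      obtain ⟨e, he, hv⟩ := hcov v
      have h1 : 1 < e.card := by rw [hcard e he]; omega
      obtain ⟨w, hw, hne⟩ := Finset.exists_mem_ne h1 v
      exact ⟨w, hne.symm, e, he, hv, hw⟩)
  refine ⟨φ, hinj, fun e he => ?_⟩
  simp only [cliqueHypergraph, Finset.mem_filter, Finset.mem_powersetCard]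
  refine ⟨⟨Finset.subset_univ _, (Finset.card_image_of_injective e hinj).trans (hcard e he)⟩, ?_⟩
  intro x hx y hy hne
  obtain ⟨a, ha, rfl⟩ := Finset.mem_image.1 hx
  obtain ⟨b, hb, rfl⟩ := Finset.mem_image.1 hy
  exact hφ a b ⟨fun h => hne (congrArg φ h), e, he, ha, hb⟩
end
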